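/- arXiv:math/0603436 — 4 statements merged into one kernel-verified Lean document; each statement's English description precedes it below -/
import Mathlib

section
/- Let K be a number field and v a finite place of K whose residue characteristic is not 2, with valuation ring o_v, maximal ideal m_v, and residue field k_v. Let F ∈ o_v[x] be a monic cubic polynomial whose reduction modulo m_v has no repeated roots in the algebraic closure of k_v. Then the reductions modulo m_v of the polynomials 4F(x) and (F'(x))² − 8xF(x) have no common root in the algebraic closure of k_v, and the leading coefficient of (F'(x))² − 8xF(x) is a v-adic unit; consequently the Lattès map φ(x) = ((F'(x))² − 8xF(x))/(4F(x)) has simple good reduction at v. -/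
/-!
Statement 1.  Let `K` be a number field, `v` a finite place with valuation ring
`o_v` (the localization of `o_K` at `v`) and residue characteristic `≠ 2`.  Let
`F ∈ o_v[x]` be a monic cubic whose reduction mod `m_v` has no repeated roots in the
algebraic closure of the residue field.  Then the reductions of `4F(x)` and
`(F'(x))² − 8xF(x)` have no common root in the algebraic closure of the residue
field, the leading coefficient of `(F'(x))² − 8xF(x)` is a `v`-adic unit, and hence
the Lattès map `φ(x) = ((F')² − 8xF)/(4F)` has simple good reduction at `v` (the
degree-4 homogenizations of the numerator and denominator have no common projective
root over the algebraic closure of the residue field).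

The algebraic closure of the residue field is encoded as an algebraically closed
field `Ω` equipped with a ring homomorphism `ψ : o_v → Ω` whose kernel is the
maximal ideal `m_v`.
-/

noncomputable section

open IsDedekindDomain NumberField Polynomial

/-- Evaluation at `(s, t) ∈ Ω²` of the image under `ψ` of the degree-`d`
homogenization `∑ i, coeff i · x^i · y^(d-i)` of a polynomial `p`. -/
def homEval {R Ω : Type*} [CommRing R] [CommRing Ω] (ψ : R →+* Ω)
    (d : ℕ) (p : Polynomial R) (s t : Ω) : Ω :=
  ∑ i ∈ Finset.range (d + 1), ψ (p.coeff i) * s ^ i * t ^ (d - i)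

theorem lattes_map_has_simple_good_reduction
    (K : Type*) [Field K] [NumberField K]
    (v : HeightOneSpectrum (𝓞 K))
    (Ω : Type*) [Field Ω] [IsAlgClosed Ω]
    -- reduction from `o_v` to the algebraic closure of the residue field at `v`
    (ψ : Localization.AtPrime v.asIdeal →+* Ω)
    (hψ : RingHom.ker ψ = IsLocalRing.maximalIdeal (Localization.AtPrime v.asIdeal))
    -- the residue characteristic of `v` is not `2`
    (hchar : ψ 2 ≠ 0)
    -- `F` is a monic cubic whose reduction has no repeated roots
    (F : Polynomial (Localization.AtPrime v.asIdeal))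
    (hmonic : F.Monic) (hdeg : F.natDegree = 3)
    (hgood : ∀ α : Ω, (F.map ψ).rootMultiplicity α ≤ 1) :
    -- the reductions of `(F')² − 8xF` and `4F` have no common (affine) root ...
    (∀ α : Ω, ¬(((derivative F ^ 2 - C 8 * (X * F)).map ψ).eval α = 0 ∧
        ((C 4 * F).map ψ).eval α = 0)) ∧
    -- ... the leading coefficient of `(F')² − 8xF` is a `v`-adic unit ...
    IsUnit (derivative F ^ 2 - C 8 * (X * F)).leadingCoeff ∧
    -- ... and consequently the Lattès map `((F')² − 8xF)/(4F)` has simple good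
    -- reduction at `v`: no common projective root after reduction
    (∀ s t : Ω, ¬(s = 0 ∧ t = 0) →
      ¬(homEval ψ 4 (derivative F ^ 2 - C 8 * (X * F)) s t = 0 ∧
        homEval ψ 4 (C 4 * F) s t = 0)) := by
  obtain ⟨a, b, c, hF⟩ : ∃ a b c, F = X ^ 3 + C a * X ^ 2 + C b * X + C c := by
    refine ⟨F.coeff 2, F.coeff 1, F.coeff 0, ?_⟩
    have h3 : F.coeff 3 = 1 := by
      have h := hmonic.coeff_natDegree
      rwa [hdeg] at h
    conv_lhs => rw [F.as_sum_range_C_mul_X_pow, hdeg]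
    simp [Finset.sum_range_succ, h3]
    ring
  have hP : derivative F ^ 2 - C 8 * (X * F) =
      C 1 * X ^ 4 + C (4 * a) * X ^ 3 + C (4 * a ^ 2 - 2 * b) * X ^ 2
        + C (4 * a * b - 8 * c) * X + C (b ^ 2) := by
    rw [hF]
    simp only [derivative_add, derivative_mul, derivative_X_pow, derivative_C, derivative_X,
      map_sub, map_mul, map_pow, map_ofNat, map_one, map_natCast]
    push_cast
    ring
  have hQ : C 4 * F = C 0 * X ^ 4 + C 4 * X ^ 3 + C (4 * a) * X ^ 2 + C (4 * b) * X
      + C (4 * c) := by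
    rw [hF]
    simp only [map_mul, map_zero]
    ring
  have hom : ∀ p q r u w : Localization.AtPrime v.asIdeal, ∀ s t : Ω,
      homEval ψ 4 (C p * X ^ 4 + C q * X ^ 3 + C r * X ^ 2 + C u * X + C w) s t =
        ψ p * s ^ 4 + ψ q * s ^ 3 * t + ψ r * s ^ 2 * t ^ 2 + ψ u * s * t ^ 3 + ψ w * t ^ 4 := by
    intro p q r u w s t
    simp [homEval, Finset.sum_range_succ, coeff_X, coeff_C, coeff_X_pow]
    ring
  have h1 : ∀ α : Ω, ¬(((derivative F ^ 2 - C 8 * (X * F)).map ψ).eval α = 0 ∧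
        ((C 4 * F).map ψ).eval α = 0) := by
    rintro α ⟨hα, hβ⟩
    have h4 : ψ 4 ≠ 0 := by
      have : (4 : Localization.AtPrime v.asIdeal) = 2 * 2 := by norm_num
      rw [this, map_mul]
      exact mul_ne_zero hchar hchar
    have hF0 : (F.map ψ).eval α = 0 := by
      rw [Polynomial.map_mul, eval_mul, map_C, eval_C] at hβ
      exact (mul_eq_zero.mp hβ).resolve_left h4
    have hD0 : (derivative (F.map ψ)).eval α = 0 := by
      rw [Polynomial.map_sub, Polynomial.map_pow, Polynomial.map_mul, Polynomial.map_mul,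
        eval_sub, eval_mul, eval_mul, hF0, eval_pow, ← derivative_map] at hα
      simpa using hα
    have hne : F.map ψ ≠ 0 := (hmonic.map ψ).ne_zero
    have := (one_lt_rootMultiplicity_iff_isRoot hne).mpr ⟨hF0, hD0⟩
    exact absurd (hgood α) (not_le.mpr this)
  refine ⟨h1, ?_, ?_⟩
  · have hm : (derivative F ^ 2 - C 8 * (X * F)).Monic := by
      rw [hP]
      monicity!
    rw [hm.leadingCoeff]
    exact isUnit_one
  · rintro s t hst ⟨hs, ht⟩
    by_cases t0 : t = 0
    · subst t0
      rw [hP, hom] at hs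
      apply hst
      simpa using hs
    · apply h1 (s / t)
      have key : ∀ p q r u w : Localization.AtPrime v.asIdeal,
          homEval ψ 4 (C p * X ^ 4 + C q * X ^ 3 + C r * X ^ 2 + C u * X + C w) s t = 0 →
          ((C p * X ^ 4 + C q * X ^ 3 + C r * X ^ 2 + C u * X + C w).map ψ).eval (s / t) = 0 := by
        intro p q r u w h
        rw [hom] at h
        have h5 : t ^ 4 * ((C p * X ^ 4 + C q * X ^ 3 + C r * X ^ 2 + C u * X + C w).map ψ).eval
            (s / t) = 0 := by
          rw [← h]
          simp only [Polynomial.map_add, Polynomial.map_mul, Polynomial.map_pow, map_C, map_X,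
            eval_add, eval_mul, eval_pow, eval_C, eval_X]
          field_simp
        exact (mul_eq_zero.mp h5).resolve_left (pow_ne_zero 4 t0)
      rw [hP] at hs ⊢
      rw [hQ] at ht ⊢
      exact ⟨key _ _ _ _ _ hs, key _ _ _ _ _ ht⟩

end
end

section
/- Let L be an algebraically closed field of characteristic 0, let Y be a finite subset of P¹(L), and let n > 1 be an integer. Then there are only finitely many morphisms φ: P¹_L → P¹_L of degree n satisfying all of: (1) every ramification point of φ lies in Y; (2) every critical value of φ (i.e., every point of φ(Supp R_φ)) lies in Y; and (3) φ has at least 3 distinct ramification points. -/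
/-!
Statement 8.  Let `L` be an algebraically closed field of characteristic `0`,
`Y ⊆ ℙ¹(L)` finite, `n > 1`.  There are only finitely many morphisms
`φ : ℙ¹_L → ℙ¹_L` of degree `n` with all ramification points in `Y`, all critical
values in `Y`, and at least `3` distinct ramification points.

A morphism of degree `n` is encoded by a pair of homogeneous binary forms `(P, Q)`
of degree `n` with no common projective zero; two pairs give the same morphism
exactly when they are proportional, so "finitely many morphisms" means a finite set
of pairs such that every such morphism is given by a scalar multiple of a member.
-/

noncomputable section

namespace CGR

variable {F : Type*} [Field F]

/-- The homogeneous Wronskian of a pair of binary forms. -/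
def wronskian (P Q : MvPolynomial (Fin 2) F) : MvPolynomial (Fin 2) F :=
  MvPolynomial.pderiv 0 P * MvPolynomial.pderiv 1 Q -
    MvPolynomial.pderiv 1 P * MvPolynomial.pderiv 0 Q

/-- The binary forms `P, Q` have no common projective root. -/
def NoCommonRoot (P Q : MvPolynomial (Fin 2) F) : Prop :=
  ∀ u : Fin 2 → F, MvPolynomial.eval u P = 0 → MvPolynomial.eval u Q = 0 → u = 0

/-- The set of ramification points in `ℙ¹(F)` of the morphism `[P : Q]`:
the projective zero locus of the homogeneous Wronskian. -/
def ramPoints (P Q : MvPolynomial (Fin 2) F) : Set (Projectivization F (Fin 2 → F)) :=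
  {x | MvPolynomial.eval x.rep (wronskian P Q) = 0}

/-- The set of critical values in `ℙ¹(F)` of the morphism `[P : Q]`: the images of
the ramification points. -/
def critValues (P Q : MvPolynomial (Fin 2) F) : Set (Projectivization F (Fin 2 → F)) :=
  {y | ∃ (u : Fin 2 → F) (_ : u ≠ 0)
      (h : ![MvPolynomial.eval u P, MvPolynomial.eval u Q] ≠ 0),
    MvPolynomial.eval u (wronskian P Q) = 0 ∧ Projectivization.mk F _ h = y}

end CGR

open CGR

section Helpers

open Polynomial

theorem CGR.eval_smul_of_hom {L : Type*} [Field L] {P : MvPolynomial (Fin 2) L} {n : ℕ}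
    (hP : P.IsHomogeneous n) (c : L) (v : Fin 2 → L) :
    MvPolynomial.eval (c • v) P = c ^ n * MvPolynomial.eval v P := by
  rw [MvPolynomial.eval_eq', MvPolynomial.eval_eq', Finset.mul_sum]
  refine Finset.sum_congr rfl fun d hd => ?_
  have h := hP (MvPolynomial.mem_support_iff.1 hd)
  rw [Finsupp.weight_apply, Finsupp.sum_fintype _ _ (by simp)] at h
  simp at h
  simp [Fin.prod_univ_two, mul_pow, ← h, pow_add]
  ring

/-- Restriction of a binary form to the affine line `t ↦ (t, 1 + s t)`. -/
def CGR.line {L : Type*} [Field L] (s : L) : MvPolynomial (Fin 2) L →ₐ[L] L[X] :=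
  MvPolynomial.aeval ![X, 1 + C s * X]

theorem CGR.eval_line {L : Type*} [Field L] (s t : L) (P : MvPolynomial (Fin 2) L) :
    (line s P).eval t = MvPolynomial.eval ![t, 1 + s * t] P := by
  induction P using MvPolynomial.induction_on with
  | C a => simp [line]
  | add p q hp hq => simp [hp, hq]
  | mul_X p i hp =>
    rw [map_mul, eval_mul, hp, map_mul]
    fin_cases i <;> simp [line]

theorem CGR.derivative_line {L : Type*} [Field L] (s : L) (P : MvPolynomial (Fin 2) L) :
    derivative (line s P) =
      line s (MvPolynomial.pderiv 0 P) + C s * line s (MvPolynomial.pderiv 1 P) := by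
  induction P using MvPolynomial.induction_on with
  | C a => simp [line]
  | add p q hp hq => simp [hp, hq]; ring
  | mul_X p i hp =>
    rw [map_mul, derivative_mul, hp]
    fin_cases i <;> simp [line, MvPolynomial.pderiv_X, Derivation.leibniz] <;> ring

theorem CGR.line_degree {L : Type*} [Field L] (s : L) {P : MvPolynomial (Fin 2) L} {n : ℕ}
    (hP : P.IsHomogeneous n) :
    (line s P).natDegree ≤ n ∧ (line s P).coeff n = MvPolynomial.eval ![1, s] P := by
  have h1 : ∀ d ∈ P.support, d 0 + d 1 = n := by
    intro d hd
    have h := hP (MvPolynomial.mem_support_iff.1 hd)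
    rw [Finsupp.weight_apply, Finsupp.sum_fintype _ _ (by simp)] at h
    simpa using h
  have h2 : line s P = ∑ d ∈ P.support, C (P.coeff d) * (X ^ d 0 * (1 + C s * X) ^ d 1) := by
    rw [line, MvPolynomial.aeval_def, MvPolynomial.eval₂_eq']
    simp [Fin.prod_univ_two]
  have hd1 : (1 + C s * X : L[X]).natDegree ≤ 1 := by compute_degree
  have hd2 : ∀ k, ((1 + C s * X : L[X]) ^ k).natDegree ≤ k := fun k =>
    (natDegree_pow_le_of_le k hd1).trans (by simp)
  rw [h2]
  constructor
  · refine natDegree_sum_le_of_forall_le _ _ fun d hd => ?_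
    refine (natDegree_C_mul_le _ _).trans ?_
    rw [← h1 d hd]
    exact natDegree_mul_le_of_le (natDegree_X_pow_le _) (hd2 _)
  · rw [finsetSum_coeff, MvPolynomial.eval_eq']
    refine Finset.sum_congr rfl fun d hd => ?_
    have h3 := coeff_pow_of_natDegree_le (m := d 1) hd1
    rw [mul_one] at h3
    rw [coeff_C_mul, ← h1 d hd, add_comm (d 0), coeff_X_pow_mul, h3]
    simp [Fin.prod_univ_two, coeff_one]

theorem CGR.line_injective {L : Type*} [Field L] [Infinite L] (s : L)
    {P : MvPolynomial (Fin 2) L} {n : ℕ}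
    (hP : P.IsHomogeneous n) (h : line s P = 0) : P = 0 := by
  apply MvPolynomial.funext
  intro v
  rw [map_zero]
  by_cases hv : v 1 - s * v 0 = 0
  · have : v = v 0 • ![1, s] := by
      ext i; fin_cases i
      · simp
      · simp; linear_combination hv
    rw [this, eval_smul_of_hom hP, ← (line_degree s hP).2, h]; simp
  · have : v = (v 1 - s * v 0) • ![v 0 / (v 1 - s * v 0), 1 + s * (v 0 / (v 1 - s * v 0))] := by
      ext i; fin_cases i
      · simp; rw [mul_div_cancel₀ _ hv]
      · simp; field_simp; ring
    rw [this, eval_smul_of_hom hP, ← eval_line, h]; simp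

theorem CGR.line_wronskian {L : Type*} [Field L] (s : L)
    {P Q : MvPolynomial (Fin 2) L} {n : ℕ}
    (hP : P.IsHomogeneous n) (hQ : Q.IsHomogeneous n) :
    (n : L[X]) * (derivative (line s P) * line s Q - line s P * derivative (line s Q))
      = line s (wronskian P Q) := by
  have eP := congrArg (line s) hP.sum_X_mul_pderiv
  have eQ := congrArg (line s) hQ.sum_X_mul_pderiv
  rw [derivative_line, derivative_line]
  simp only [Fin.sum_univ_two, map_add, map_mul, nsmul_eq_mul, map_natCast] at eP eQ
  have x0 : line s (MvPolynomial.X 0) = X := by simp [line]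
  have x1 : line s (MvPolynomial.X 1) = 1 + C s * X := by simp [line]
  rw [x0, x1] at eP eQ
  simp only [wronskian, map_sub, map_mul]
  linear_combination (-(line s (MvPolynomial.pderiv 0 P) + C s * line s (MvPolynomial.pderiv 1 P))) * eQ
    + (line s (MvPolynomial.pderiv 0 Q) + C s * line s (MvPolynomial.pderiv 1 Q)) * eP

/-- Local divisibility, with `q t ≠ 0`. -/
theorem CGR.local_aux {L : Type*} [Field L] [CharZero L] {r q w : L[X]} {t : L} {m : ℕ}
    (hw : r * derivative q - derivative r * q = w) (hw0 : w ≠ 0)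
    (hq : q.eval t ≠ 0) (hr : r.eval t = 0) (hm : (X - C t) ^ m ∣ w) :
    (X - C t) ^ (m + 1) ∣ r := by
  have hr0 : r ≠ 0 := by rintro rfl; apply hw0; rw [← hw]; simp
  rw [← le_rootMultiplicity_iff hr0]
  by_contra hlt
  have hk : r.rootMultiplicity t ≤ m := by omega
  have hpos : 0 < r.rootMultiplicity t := (rootMultiplicity_pos hr0).2 hr
  have hder := derivative_rootMultiplicity_of_root (p := r) (t := t) hr
  have hd0 : derivative r ≠ 0 := by
    intro h0
    have := derivative_eq_zero.1 h0
    obtain ⟨c, hc⟩ := natDegree_eq_zero.1 this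
    rw [← hc] at hr hr0
    simp at hr
    simp [hr] at hr0
  have h1 : (X - C t) ^ r.rootMultiplicity t ∣ derivative r * q := by
    have e : derivative r * q = r * derivative q - w := by rw [← hw]; ring
    rw [e]
    exact dvd_sub ((pow_rootMultiplicity_dvd r t).mul_right _) ((pow_dvd_pow _ hk).trans hm)
  have hc : IsCoprime ((X - C t) ^ r.rootMultiplicity t) q := by
    apply IsCoprime.pow_left
    rw [Irreducible.coprime_iff_not_dvd (irreducible_X_sub_C t), dvd_iff_isRoot]
    exact hq
  have h2 := hc.dvd_of_dvd_mul_right h1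
  rw [← le_rootMultiplicity_iff hd0] at h2
  omega

theorem CGR.local_dvd {L : Type*} [Field L] [CharZero L] {p q w : L[X]} {t a b k : L} {m : ℕ}
    (hw : derivative p * q - p * derivative q = w) (hw0 : w ≠ 0) (hk : k ≠ 0)
    (ha : p.eval t = k * a) (hb : q.eval t = k * b) (hab : a ≠ 0 ∨ b ≠ 0)
    (hm : (X - C t) ^ m ∣ w) :
    (X - C t) ^ (m + 1) ∣ C b * p - C a * q := by
  have hr : (C b * p - C a * q).eval t = 0 := by simp [ha, hb]; ring
  rcases hab with h | h
  · refine local_aux (q := p) (w := - C a * w) ?_ ?_ ?_ hr (hm.mul_left _)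
    · rw [← hw]; simp; ring
    · simp [h, hw0]
    · rw [ha]; exact mul_ne_zero hk h
  · refine local_aux (q := q) (w := - C b * w) ?_ ?_ ?_ hr (hm.mul_left _)
    · rw [← hw]; simp; ring
    · simp [h, hw0]
    · rw [hb]; exact mul_ne_zero hk h

/-- Two pairs with the same data have proportional numerators and denominators. -/
theorem CGR.cross_eq {L : Type*} [Field L] {p q p1 q1 : L[X]} {n : ℕ}
    (hp : p.natDegree ≤ n) (hq : q.natDegree ≤ n) (hp1 : p1.natDegree ≤ n) (hq1 : q1.natDegree ≤ n)
    (S : Finset L) (e : S → ℕ) (a b : S → L) (hab : ∀ t, a t ≠ 0 ∨ b t ≠ 0)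
    (he : 2 * n < ∑ t, e t)
    (h : ∀ t : S, (X - C (t : L)) ^ e t ∣ C (b t) * p - C (a t) * q)
    (h1 : ∀ t : S, (X - C (t : L)) ^ e t ∣ C (b t) * p1 - C (a t) * q1) :
    p1 * q = p * q1 := by
  rw [← sub_eq_zero]
  by_contra hne
  have hdvd : ∀ t : S, (X - C (t : L)) ^ e t ∣ p1 * q - p * q1 := by
    intro t
    rcases hab t with ht | ht
    · have e1 : C (a t) * (p1 * q - p * q1)
          = p * (C (b t) * p1 - C (a t) * q1) - p1 * (C (b t) * p - C (a t) * q) := by ring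
      have e2 := dvd_sub ((h1 t).mul_left p) ((h t).mul_left p1)
      rw [← e1] at e2
      exact (isUnit_C.2 (isUnit_iff_ne_zero.2 ht)).dvd_mul_left.1 e2
    · have e1 : C (b t) * (p1 * q - p * q1)
          = q * (C (b t) * p1 - C (a t) * q1) - q1 * (C (b t) * p - C (a t) * q) := by ring
      have e2 := dvd_sub ((h1 t).mul_left q) ((h t).mul_left q1)
      rw [← e1] at e2
      exact (isUnit_C.2 (isUnit_iff_ne_zero.2 ht)).dvd_mul_left.1 e2
  have hprod : ∏ t : S, (X - C (t : L)) ^ e t ∣ p1 * q - p * q1 := by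
    refine Fintype.prod_dvd_of_coprime ?_ hdvd
    intro x y hxy
    exact (pairwise_coprime_X_sub_C (s := fun t : S => (t : L)) Subtype.val_injective hxy).pow
  have hdeg := natDegree_le_of_dvd hprod hne
  rw [natDegree_prod_of_monic _ _ (fun t _ => (monic_X_sub_C _).pow _)] at hdeg
  simp only [natDegree_pow, natDegree_X_sub_C, mul_one] at hdeg
  have : (p1 * q - p * q1).natDegree ≤ n + n :=
    (natDegree_sub_le_of_le (natDegree_mul_le_of_le hp1 hq)
      (natDegree_mul_le_of_le hp hq1)).trans (by simp)
  omega

theorem CGR.proportional {L : Type*} [Field L] [IsAlgClosed L] [Infinite L] (s : L) {n : ℕ}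
    {P Q P1 Q1 : MvPolynomial (Fin 2) L}
    (hP : P.IsHomogeneous n) (hQ : Q.IsHomogeneous n) (hPQ : NoCommonRoot P Q)
    (hP1 : P1.IsHomogeneous n) (hQ1 : Q1.IsHomogeneous n) (hPQ1 : NoCommonRoot P1 Q1)
    (h : line s P1 * line s Q = line s P * line s Q1) :
    ∃ c : Lˣ, P1 = (c : L) • P ∧ Q1 = (c : L) • Q := by
  have hcop : IsCoprime (line s P) (line s Q) := by
    rw [isCoprime_iff_aeval_ne_zero_of_isAlgClosed L L]
    intro t
    by_contra hcon
    push Not at hcon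
    simp only [coe_aeval_eq_eval, eval_line] at hcon
    have h0 := hPQ _ hcon.1 hcon.2
    have h1 : t = 0 := by simpa using congrFun h0 0
    have h2 := congrFun h0 1
    simp [h1] at h2
  obtain ⟨a, b, hab⟩ := hcop
  obtain ⟨r, hr⟩ : ∃ r, r = a * line s P1 + b * line s Q1 := ⟨_, rfl⟩
  have e1 : line s P1 = line s P * r := by rw [hr]; linear_combination (-line s P1) * hab + b * h
  have e2 : line s Q1 = line s Q * r := by rw [hr]; linear_combination (-line s Q1) * hab - a * h
  have hr0 : r.natDegree = 0 := by
    have key : ∀ R R1 : MvPolynomial (Fin 2) L, R.IsHomogeneous n → R1.IsHomogeneous n →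
        line s R1 = line s R * r → MvPolynomial.eval ![1, s] R ≠ 0 → r.natDegree = 0 := by
      intro R R1 hR hR1 e hne
      by_cases hrz : r = 0
      · simp [hrz]
      obtain ⟨d1, d2⟩ := line_degree s hR
      rw [← d2] at hne
      have d3 := le_natDegree_of_ne_zero hne
      have d4 := (line_degree s hR1).1
      rw [e, natDegree_mul (by rintro h0; simp [h0] at hne) hrz] at d4
      omega
    by_cases hz : MvPolynomial.eval ![1, s] P = 0
    · refine key Q Q1 hQ hQ1 e2 fun hz2 => ?_
      have := congrFun (hPQ _ hz hz2) 0
      simp at this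
    · exact key P P1 hP hP1 e1 hz
  obtain ⟨c, rfl⟩ := natDegree_eq_zero.1 hr0
  have f1 : P1 = c • P := by
    rw [← sub_eq_zero]
    refine line_injective s (n := n) (hP1.sub ((MvPolynomial.homogeneousSubmodule _ _ n).smul_mem c hP)) ?_
    rw [map_sub, map_smul, e1, smul_eq_C_mul]; ring
  have f2 : Q1 = c • Q := by
    rw [← sub_eq_zero]
    refine line_injective s (n := n) (hQ1.sub ((MvPolynomial.homogeneousSubmodule _ _ n).smul_mem c hQ)) ?_
    rw [map_sub, map_smul, e2, smul_eq_C_mul]; ring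
  have hc : c ≠ 0 := by
    rintro rfl
    have := congrFun (hPQ1 ![1, 0] (by simp [f1]) (by simp [f2])) 0
    simp at this
  exact ⟨Units.mk0 c hc, f1, f2⟩

theorem CGR.mem_ramPoints_mk {L : Type*} [Field L] {P Q : MvPolynomial (Fin 2) L} {m : ℕ}
    (hW : (wronskian P Q).IsHomogeneous m) (v : Fin 2 → L) (hv : v ≠ 0) :
    Projectivization.mk L v hv ∈ ramPoints P Q ↔ MvPolynomial.eval v (wronskian P Q) = 0 := by
  obtain ⟨a, ha⟩ := Projectivization.exists_smul_eq_mk_rep L v hv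
  have h0 : (a : L) ^ m ≠ 0 := pow_ne_zero _ a.ne_zero
  simp only [ramPoints, Set.mem_setOf_eq]
  rw [← ha, Units.smul_def, eval_smul_of_hom hW]
  simp [h0]

theorem CGR.aff_ne {L : Type*} [Field L] (s t : L) : ![t, 1 + s * t] ≠ 0 := by
  intro h
  have h0 : t = 0 := by simpa using congrFun h 0
  have h1 := congrFun h 1
  simp [h0] at h1

theorem CGR.inf_ne {L : Type*} [Field L] (s : L) : ![1, s] ≠ 0 := by
  intro h
  have h0 := congrFun h 0
  simp at h0

/-- The point of the projective line with affine parameter `t`. -/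
def CGR.pt {L : Type*} [Field L] (s t : L) : Projectivization L (Fin 2 → L) :=
  Projectivization.mk L _ (CGR.aff_ne s t)

theorem CGR.pt_injective {L : Type*} [Field L] (s : L) : Function.Injective (CGR.pt s) := by
  intro t t' h
  rw [pt, pt, Projectivization.mk_eq_mk_iff'] at h
  obtain ⟨a, ha⟩ := h
  have h0 : a * t' = t := by simpa using congrFun ha 0
  have h1 : a * (1 + s * t') = 1 + s * t := by simpa using congrFun ha 1
  have : a = 1 := by linear_combination h1 - s * h0
  rw [← h0, this, one_mul]

theorem CGR.exists_pt {L : Type*} [Field L] (s : L) (x : Projectivization L (Fin 2 → L))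
    (hx : x ≠ Projectivization.mk L _ (CGR.inf_ne s)) : ∃ t, x = pt s t := by
  induction x using Projectivization.ind with
  | h v hv =>
  by_cases h : v 1 - s * v 0 = 0
  · exfalso
    apply hx
    rw [Projectivization.mk_eq_mk_iff']
    refine ⟨v 0, ?_⟩
    ext i; fin_cases i
    · simp
    · simp; linear_combination -h
  · refine ⟨v 0 / (v 1 - s * v 0), ?_⟩
    rw [pt, Projectivization.mk_eq_mk_iff']
    refine ⟨v 1 - s * v 0, ?_⟩
    ext i; fin_cases i
    · simp; rw [mul_div_cancel₀ _ h]
    · simp; field_simp; ring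

theorem CGR.exists_inf {L : Type*} [Field L] [Infinite L]
    (Y : Set (Projectivization L (Fin 2 → L))) (hY : Y.Finite) :
    ∃ s : L, Projectivization.mk L _ (CGR.inf_ne s) ∉ Y := by
  by_contra! h
  have hinj : Function.Injective
      (fun s : L => Projectivization.mk L ![1, s] (CGR.inf_ne s)) := by
    intro s s' hs
    simp only [Projectivization.mk_eq_mk_iff'] at hs
    obtain ⟨a, ha⟩ := hs
    have h0 : a = 1 := by simpa using congrFun ha 0
    have h1 : a * s' = s := by simpa using congrFun ha 1
    rw [← h1, h0, one_mul]
  exact Set.infinite_of_injective_forall_mem hinj h hY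

/-- The pair `(P, Q)` realizes the ramification data `d`. -/
def CGR.Realizes {L : Type*} [Field L] (s : L) (Y : Set (Projectivization L (Fin 2 → L)))
    (n : ℕ) (S : Finset L) (pq : MvPolynomial (Fin 2) L × MvPolynomial (Fin 2) L)
    (d : S → Fin (2 * n) × Y) : Prop :=
  pq.1.IsHomogeneous n ∧ pq.2.IsHomogeneous n ∧ NoCommonRoot pq.1 pq.2 ∧
    2 * n < ∑ t, ((d t).1 : ℕ) ∧
    ∀ t : S, (X - C (t : L)) ^ ((d t).1 : ℕ) ∣
      C ((d t).2.1.rep 1) * line s pq.1 - C ((d t).2.1.rep 0) * line s pq.2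

theorem CGR.exists_data {L : Type*} [Field L] [IsAlgClosed L] [CharZero L] (s : L)
    (Y : Set (Projectivization L (Fin 2 → L))) (n : ℕ) (hn : 1 < n) (S : Finset L)
    (hs : Projectivization.mk L _ (CGR.inf_ne s) ∉ Y) (hS : ∀ t, pt s t ∈ Y → t ∈ S)
    {P Q : MvPolynomial (Fin 2) L} (hP : P.IsHomogeneous n) (hQ : Q.IsHomogeneous n)
    (hPQ : NoCommonRoot P Q) (h1 : ramPoints P Q ⊆ Y) (h2 : critValues P Q ⊆ Y)
    (h3 : ∃ x y z, x ≠ y ∧ x ≠ z ∧ y ≠ z ∧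
          x ∈ ramPoints P Q ∧ y ∈ ramPoints P Q ∧ z ∈ ramPoints P Q) :
    ∃ d : S → Fin (2 * n) × Y, Realizes s Y n S (P, Q) d := by
  classical
  have hW : (wronskian P Q).IsHomogeneous (2 * n - 2) := by
    have e : 2 * n - 2 = (n - 1) + (n - 1) := by omega
    rw [e]
    exact (hP.pderiv.mul hQ.pderiv).sub (hP.pderiv.mul hQ.pderiv)
  obtain ⟨w, hw⟩ : ∃ w, w = line s (wronskian P Q) := ⟨_, rfl⟩
  obtain ⟨d1, d2⟩ := line_degree s hW
  have hinf : MvPolynomial.eval ![1, s] (wronskian P Q) ≠ 0 := fun h =>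
    hs (h1 ((mem_ramPoints_mk hW _ _).2 h))
  rw [← hw] at d1 d2
  rw [← d2] at hinf
  have hw0 : w ≠ 0 := by rintro rfl; simp at hinf
  have hwdeg : w.natDegree = 2 * n - 2 := le_antisymm d1 (le_natDegree_of_ne_zero hinf)
  have hram : ∀ t, pt s t ∈ ramPoints P Q ↔ t ∈ w.roots.toFinset := by
    intro t
    rw [pt, mem_ramPoints_mk hW, ← eval_line, ← hw, Multiset.mem_toFinset, mem_roots hw0]
    rfl
  have hZS : w.roots.toFinset ⊆ S := fun t ht => hS t (h1 ((hram t).2 ht))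
  have hcard : 3 ≤ w.roots.toFinset.card := by
    obtain ⟨x, y, z, hxy, hxz, hyz, hx, hy, hz⟩ := h3
    obtain ⟨a, rfl⟩ := exists_pt s x (fun h => hs (h ▸ h1 hx))
    obtain ⟨b, rfl⟩ := exists_pt s y (fun h => hs (h ▸ h1 hy))
    obtain ⟨c, rfl⟩ := exists_pt s z (fun h => hs (h ▸ h1 hz))
    rw [hram] at hx hy hz
    have : 2 < w.roots.toFinset.card := Finset.two_lt_card.2
      ⟨a, hx, b, hy, c, hz, fun h => hxy (h ▸ rfl), fun h => hxz (h ▸ rfl), fun h => hyz (h ▸ rfl)⟩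
    exact this
  have hroots : ∑ t ∈ w.roots.toFinset, w.rootMultiplicity t = 2 * n - 2 := by
    rw [← hwdeg, (IsAlgClosed.splits w).natDegree_eq_card_roots, ← Multiset.toFinset_sum_count_eq]
    simp
  have hmle : ∀ t, w.rootMultiplicity t ≤ 2 * n - 2 := by
    intro t
    rw [← hwdeg, ← count_roots]
    exact (Multiset.count_le_card _ _).trans (card_roots' w)
  obtain ⟨y0, hy0⟩ : ∃ y, y ∈ Y := by
    obtain ⟨x, _, _, _, _, _, hx, _, _⟩ := h3
    exact ⟨x, h1 hx⟩
  have hne : ∀ t, ![MvPolynomial.eval ![t, 1 + s * t] P, MvPolynomial.eval ![t, 1 + s * t] Q] ≠ 0 := by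
    intro t h
    apply aff_ne s t
    exact hPQ _ (by simpa using congrFun h 0) (by simpa using congrFun h 1)
  have hval : ∀ t, t ∈ w.roots.toFinset → Projectivization.mk L _ (hne t) ∈ Y := by
    intro t ht
    refine h2 ⟨_, aff_ne s t, hne t, ?_, rfl⟩
    rw [← eval_line, ← hw]
    rw [Multiset.mem_toFinset, mem_roots hw0] at ht
    exact ht
  refine ⟨fun t => if ht : (t : L) ∈ w.roots.toFinset then
    (⟨w.rootMultiplicity (t : L) + 1, by have := hmle t; omega⟩, ⟨_, hval t ht⟩)
    else (⟨0, by omega⟩, ⟨y0, hy0⟩), hP, hQ, hPQ, ?_, ?_⟩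
  · have e1 : ∀ t : S, (((if ht : (t : L) ∈ w.roots.toFinset then
        (⟨w.rootMultiplicity (t : L) + 1, by have := hmle t; omega⟩, ⟨_, hval t ht⟩)
        else (⟨0, by omega⟩, ⟨y0, hy0⟩) : Fin (2 * n) × Y)).1 : ℕ) =
        (fun t : L => if t ∈ w.roots.toFinset then w.rootMultiplicity t + 1 else 0) t := by
      intro t
      by_cases ht : (t : L) ∈ w.roots.toFinset
      · simp only [dif_pos ht, if_pos ht]
      · simp only [dif_neg ht, if_neg ht]
    rw [Finset.sum_congr rfl fun t _ => e1 t, Finset.sum_coe_sort S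
      (fun t : L => if t ∈ w.roots.toFinset then w.rootMultiplicity t + 1 else 0),
      ← Finset.sum_filter, Finset.filter_mem_eq_inter, Finset.inter_eq_right.2 hZS,
      Finset.sum_add_distrib, hroots]
    simp only [Finset.sum_const, smul_eq_mul, mul_one]
    omega
  · intro t
    by_cases ht : (t : L) ∈ w.roots.toFinset
    · simp only [dif_pos ht]
      obtain ⟨a, ha⟩ := Projectivization.exists_smul_eq_mk_rep L _ (hne t)
      have hlw := line_wronskian s hP hQ
      have hn0 : (n : L) ≠ 0 := by
        have : n ≠ 0 := by omega
        exact_mod_cast this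
      have hw' : derivative (line s P) * line s Q - line s P * derivative (line s Q)
          = C (n : L)⁻¹ * w := by
        rw [hw, ← hlw, ← mul_assoc, ← C_eq_natCast, ← C_mul, inv_mul_cancel₀ hn0, C_1, one_mul]
      have a0 := congrFun ha 0
      have a1 := congrFun ha 1
      rw [Units.smul_def] at a0 a1
      simp at a0 a1
      refine local_dvd (k := (a : L)⁻¹) hw' (by simp [hw0, hn0]) (by simp) ?_ ?_ ?_
        ((pow_rootMultiplicity_dvd w _).mul_left _)
      · rw [eval_line, ← a0, inv_mul_cancel_left₀ a.ne_zero]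
      · rw [eval_line, ← a1, inv_mul_cancel_left₀ a.ne_zero]
      · by_contra! hc
        apply Projectivization.rep_nonzero (Projectivization.mk L _ (hne t))
        ext i; fin_cases i
        · exact hc.1
        · exact hc.2
    · simp only [dif_neg ht, pow_zero]
      exact one_dvd _

end Helpers


theorem finitely_many_maps_with_constrained_ramification
    (L : Type*) [Field L] [IsAlgClosed L] [CharZero L]
    (Y : Set (Projectivization L (Fin 2 → L))) (hY : Y.Finite)
    (n : ℕ) (hn : 1 < n) :
    ∃ T : Set (MvPolynomial (Fin 2) L × MvPolynomial (Fin 2) L), T.Finite ∧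
      ∀ P Q : MvPolynomial (Fin 2) L,
        P.IsHomogeneous n → Q.IsHomogeneous n → NoCommonRoot P Q →
        -- (1) every ramification point of φ lies in Y
        ramPoints P Q ⊆ Y →
        -- (2) every critical value of φ lies in Y
        critValues P Q ⊆ Y →
        -- (3) φ has at least 3 distinct ramification points
        (∃ x y z, x ≠ y ∧ x ≠ z ∧ y ≠ z ∧
          x ∈ ramPoints P Q ∧ y ∈ ramPoints P Q ∧ z ∈ ramPoints P Q) →
        ∃ pq ∈ T, ∃ c : Lˣ, P = (c : L) • pq.1 ∧ Q = (c : L) • pq.2 := by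
  classical
  have : Infinite L := CharZero.infinite L
  obtain ⟨s, hs⟩ := exists_inf Y hY
  have hfin : {t | pt s t ∈ Y}.Finite := hY.preimage (pt_injective s).injOn
  have : Finite Y := hY
  obtain ⟨S, hS⟩ : ∃ S : Finset L, ∀ t, pt s t ∈ Y → t ∈ S :=
    ⟨hfin.toFinset, fun t ht => hfin.mem_toFinset.2 ht⟩
  refine ⟨Set.range (fun d : S → Fin (2 * n) × Y =>
    if h : ∃ pq, Realizes s Y n S pq d then h.choose else (0, 0)), Set.finite_range _, ?_⟩
  intro P Q hP hQ hPQ h1 h2 h3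
  obtain ⟨d, hd⟩ := exists_data s Y n hn S hs hS hP hQ hPQ h1 h2 h3
  have hex : ∃ pq, Realizes s Y n S pq d := ⟨_, hd⟩
  refine ⟨_, ⟨d, rfl⟩, ?_⟩
  simp only [dif_pos hex]
  obtain ⟨g1, g2, g3, g4, g5⟩ := hex.choose_spec
  refine proportional s g1 g2 g3 hP hQ hPQ ?_
  refine cross_eq (line_degree s g1).1 (line_degree s g2).1 (line_degree s hP).1
    (line_degree s hQ).1 S (fun t => ((d t).1 : ℕ)) (fun t => (d t).2.1.rep 0)
    (fun t => (d t).2.1.rep 1) ?_ g4 g5 hd.2.2.2.2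
  intro t
  by_contra! hc
  apply Projectivization.rep_nonzero (d t).2.1
  ext i; fin_cases i
  · exact hc.1
  · exact hc.2

end
end

section
/- Let L be an algebraically closed field of characteristic 0, let n > 1, let D = Σ_{i=1}^m (e_i − 1)·Q_i be an effective divisor on P¹_L with distinct points Q₁, …, Q_m, m ≥ 3, and each e_i ≥ 2, and let P₁, …, P_m be points of P¹(L) (not necessarily distinct). Then there are only finitely many morphisms φ: P¹_L → P¹_L of degree n such that the ramification divisor of φ equals D and φ(Q_i) = P_i for all i = 1, …, m. -/
/-!
Statement 9.  Let `L` be algebraically closed of characteristic `0`, `n > 1`, and let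
`D = Σᵢ (eᵢ − 1)·Qᵢ` be an effective divisor on `ℙ¹_L` with distinct points
`Q₁, …, Q_m` (`m ≥ 3`, written in coordinates `Qᵢ = [aᵢ : bᵢ]`) and `eᵢ ≥ 2`, and let
`P₁, …, P_m = [cᵢ : dᵢ]` be (not necessarily distinct) points of `ℙ¹(L)`.  There are
only finitely many morphisms `φ : ℙ¹_L → ℙ¹_L` of degree `n` with ramification
divisor `D` and `φ(Qᵢ) = Pᵢ` for all `i`.

A morphism of degree `n` is encoded by a pair of homogeneous binary forms `(P, Q)` of
degree `n` with no common projective zero (pairs are unique up to a scalar).  The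
ramification divisor of `[P : Q]` is the divisor of zeros of the homogeneous
Wronskian, so `R_φ = D` is encoded by `W = k·∏ᵢ (bᵢ·X − aᵢ·Y)^(eᵢ−1)` for a unit `k`;
`φ(Qᵢ) = Pᵢ` is encoded by the vanishing of the cross product
`dᵢ·P(aᵢ,bᵢ) − cᵢ·Q(aᵢ,bᵢ)`.
-/

noncomputable section

namespace CGR

variable {F : Type*} [Field F]

/-- Dehomogenization along the line `(t, 1 + s t)`. -/
def dh (s : F) : MvPolynomial (Fin 2) F →ₐ[F] Polynomial F :=
  MvPolynomial.aeval ![Polynomial.X, 1 + Polynomial.C s * Polynomial.X]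

lemma hom_exp {n : ℕ} {P : MvPolynomial (Fin 2) F} (h : P.IsHomogeneous n)
    {x : Fin 2 →₀ ℕ} (hx : x ∈ P.support) : x 0 + x 1 = n := by
  have := h.degree_eq_sum_deg_support hx
  rw [Finset.sum_subset (Finset.subset_univ x.support)
    (fun i _ hi => Finsupp.notMem_support_iff.1 hi), Fin.sum_univ_two] at this
  exact this.symm

lemma dh_natDegree (s : F) {n : ℕ} {P : MvPolynomial (Fin 2) F} (h : P.IsHomogeneous n) :
    (dh s P).natDegree ≤ n := by
  rw [dh, MvPolynomial.aeval_def, MvPolynomial.eval₂_eq']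
  apply Polynomial.natDegree_sum_le_of_forall_le
  intro x hx
  have hx' := hom_exp h hx
  rw [Fin.prod_univ_two, Polynomial.algebraMap_eq]
  refine (Polynomial.natDegree_C_mul_le _ _).trans ?_
  refine Polynomial.natDegree_mul_le.trans ?_
  rw [← hx']
  have h1 : (1 + Polynomial.C s * Polynomial.X : Polynomial F).natDegree ≤ 1 := by
    compute_degree
  have h2 : (Polynomial.X : Polynomial F).natDegree ≤ 1 := Polynomial.natDegree_X_le
  have h3 := Polynomial.natDegree_pow_le_of_le (x 0) h2
  have h4 := Polynomial.natDegree_pow_le_of_le (x 1) h1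
  simp only [mul_one] at h3 h4
  exact add_le_add h3 h4

lemma eval_scale {n : ℕ} {P : MvPolynomial (Fin 2) F} (h : P.IsHomogeneous n) (l x y : F) :
    MvPolynomial.eval ![l * x, l * y] P = l ^ n * MvPolynomial.eval ![x, y] P := by
  rw [MvPolynomial.eval_eq', MvPolynomial.eval_eq', Finset.mul_sum]
  refine Finset.sum_congr rfl fun z hz => ?_
  rw [← hom_exp h hz]
  simp only [Fin.prod_univ_two, Matrix.cons_val_zero, Matrix.cons_val_one]
  ring

lemma eval_dh (s t : F) (P : MvPolynomial (Fin 2) F) :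
    (dh s P).eval t = MvPolynomial.eval ![t, 1 + s * t] P := by
  rw [dh, MvPolynomial.aeval_def, MvPolynomial.eval₂_eq', MvPolynomial.eval_eq',
    Polynomial.eval_finsetSum]
  simp [Fin.prod_univ_two]

lemma dh_inj [Infinite F] (s : F) {n : ℕ} {P : MvPolynomial (Fin 2) F} (h : P.IsHomogeneous n)
    (h0 : dh s P = 0) : P = 0 := by
  have key : (MvPolynomial.X 1 - MvPolynomial.C s * MvPolynomial.X 0) * P = 0 := by
    apply MvPolynomial.funext
    intro u
    simp only [map_mul, map_sub, MvPolynomial.eval_X, MvPolynomial.eval_C, map_zero]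
    by_cases hl : u 1 - s * u 0 = 0
    · rw [hl, zero_mul]
    · have e1 : u = ![(u 1 - s * u 0) * (u 0 / (u 1 - s * u 0)),
          (u 1 - s * u 0) * (1 + s * (u 0 / (u 1 - s * u 0)))] := by
        ext i
        fin_cases i
        · simp [mul_div_cancel₀ _ hl]
        · simp; field_simp; ring
      have e2 : MvPolynomial.eval u P = 0 := by
        rw [e1, eval_scale h, ← eval_dh, h0]; simp
      rw [e2, mul_zero]
  rcases mul_eq_zero.1 key with h1 | h1
  · exfalso
    have := congrArg (MvPolynomial.eval ![0, 1]) h1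
    simp at this
  · exact h1

lemma dh_deriv (s : F) (P : MvPolynomial (Fin 2) F) :
    Polynomial.derivative (dh s P) =
      dh s (MvPolynomial.pderiv 0 P) + Polynomial.C s * dh s (MvPolynomial.pderiv 1 P) := by
  induction P using MvPolynomial.induction_on with
  | C a => simp [dh]
  | add p q hp hq => simp only [map_add, hp, hq]; ring
  | mul_X p i hp =>
    simp only [map_mul, Polynomial.derivative_mul, hp, Derivation.leibniz, map_add, smul_eq_mul]
    fin_cases i <;> simp [dh, MvPolynomial.pderiv_X] <;> ring

lemma dh_euler (s : F) {n : ℕ} {P : MvPolynomial (Fin 2) F} (h : P.IsHomogeneous n) :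
    (n : Polynomial F) * dh s P = Polynomial.X * dh s (MvPolynomial.pderiv 0 P) +
      (1 + Polynomial.C s * Polynomial.X) * dh s (MvPolynomial.pderiv 1 P) := by
  have := congrArg (dh s) h.sum_X_mul_pderiv
  rw [Fin.sum_univ_two, nsmul_eq_mul] at this
  simp only [map_add, map_mul, map_natCast] at this
  rw [← this]
  simp [dh]

lemma dh_wronskian (s : F) {n : ℕ} {P Q : MvPolynomial (Fin 2) F} (hP : P.IsHomogeneous n)
    (hQ : Q.IsHomogeneous n) :
    (n : Polynomial F) * (dh s P * Polynomial.derivative (dh s Q) -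
      Polynomial.derivative (dh s P) * dh s Q) = - dh s (wronskian P Q) := by
  have h1 := dh_euler s hP
  have h2 := dh_euler s hQ
  rw [dh_deriv, dh_deriv, wronskian]
  simp only [map_sub, map_mul]
  linear_combination (dh s (MvPolynomial.pderiv 0 Q) +
    Polynomial.C s * dh s (MvPolynomial.pderiv 1 Q)) * h1 -
    (dh s (MvPolynomial.pderiv 0 P) + Polynomial.C s * dh s (MvPolynomial.pderiv 1 P)) * h2

open Polynomial in
lemma local_dvd_s9 [CharZero F] (t : F) (f g : Polynomial F) (hf : f.eval t = 0) (hg : g.eval t ≠ 0)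
    (k : ℕ) (h : (X - C t) ^ k ∣ f * derivative g - derivative f * g) :
    (X - C t) ^ (k + 1) ∣ f := by
  induction k with
  | zero => simpa using dvd_iff_isRoot.2 hf
  | succ k ih =>
    have h1 := ih ((pow_dvd_pow _ (Nat.le_succ k)).trans h)
    have h2 : (X - C t) ^ (k + 1) ∣ derivative f * g := by
      have := dvd_sub (h1.mul_right (derivative g)) h
      simpa using this
    have hc : IsCoprime ((X - C t) ^ (k + 1)) g := by
      apply IsCoprime.pow_left
      exact ((prime_X_sub_C t).irreducible.coprime_iff_not_dvd).2
        fun hd => hg (dvd_iff_isRoot.1 hd)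
    have h3 := hc.dvd_of_dvd_mul_right h2
    by_cases hf0 : f = 0
    · simp [hf0]
    have hd0 : derivative f ≠ 0 := by
      intro h0
      obtain ⟨c, rfl⟩ := (natDegree_eq_zero).1 (derivative_eq_zero.1 h0)
      simp at hf; simp [hf] at hf0
    have h4 := (le_rootMultiplicity_iff hd0).2 h3
    rw [derivative_rootMultiplicity_of_root hf] at h4
    exact (le_rootMultiplicity_iff hf0).1 (by omega)

open Polynomial in
lemma uni_unique [IsAlgClosed F] (p q p' q' : Polynomial F)
    (h : ∀ t, ¬ (p.eval t = 0 ∧ q.eval t = 0)) (h' : ∀ t, ¬ (p'.eval t = 0 ∧ q'.eval t = 0))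
    (he : p * q' = p' * q) : ∃ k : Fˣ, p' = (k : F) • p ∧ q' = (k : F) • q := by
  have cop : ∀ p q : Polynomial F, (∀ t, ¬ (p.eval t = 0 ∧ q.eval t = 0)) → IsCoprime p q := by
    intro p q h
    rw [Polynomial.isCoprime_iff_aeval_ne_zero_of_isAlgClosed F F]
    intro t
    simp only [coe_aeval_eq_eval]
    have := h t
    tauto
  have c1 := cop p q h
  obtain ⟨u, v, huv⟩ := c1
  obtain ⟨r, hp, hq⟩ : ∃ r, p' = p * r ∧ q' = q * r :=
    ⟨u * p' + v * q', by linear_combination (-p') * huv - v * he,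
      by linear_combination (-q') * huv + u * he⟩
  subst hp hq
  have hr : IsUnit r := (cop _ _ h').isUnit_of_dvd' (dvd_mul_left _ _) (dvd_mul_left _ _)
  obtain ⟨k, hk, rfl⟩ := Polynomial.isUnit_iff.1 hr
  exact ⟨hk.unit, by simp [smul_eq_C_mul, mul_comm], by simp [smul_eq_C_mul, mul_comm]⟩

/-- The conditions on a pair of forms in the theorem. -/
def Good (n m : ℕ) (a b c d : Fin m → F) (e : Fin m → ℕ) (P Q : MvPolynomial (Fin 2) F) : Prop :=
  P.IsHomogeneous n ∧ Q.IsHomogeneous n ∧ NoCommonRoot P Q ∧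
  (∃ k : Fˣ, wronskian P Q =
          (k : F) • ∏ i, (MvPolynomial.C (b i) * MvPolynomial.X 0 -
            MvPolynomial.C (a i) * MvPolynomial.X 1) ^ (e i - 1)) ∧
  (∀ i, d i * MvPolynomial.eval ![a i, b i] P = c i * MvPolynomial.eval ![a i, b i] Q)

lemma sum_e {n : ℕ} (hn : 1 < n) {m : ℕ} {a b c d : Fin m → F} (hQ : ∀ i, ¬(a i = 0 ∧ b i = 0))
    {e : Fin m → ℕ} {P Q : MvPolynomial (Fin 2) F}
    (h : Good n m a b c d e P Q) : ∑ i, (e i - 1) = 2 * n - 2 := by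
  obtain ⟨hP, hQ', -, ⟨k, hk⟩, -⟩ := h
  have h1 : (wronskian P Q).IsHomogeneous ((n - 1) + (n - 1)) :=
    (hP.pderiv.mul hQ'.pderiv).sub (hP.pderiv.mul hQ'.pderiv)
  have h2 : (wronskian P Q).IsHomogeneous (∑ i, (e i - 1)) := by
    rw [hk, MvPolynomial.smul_eq_C_mul]
    apply MvPolynomial.IsHomogeneous.C_mul
    apply MvPolynomial.IsHomogeneous.prod
    intro i _
    have := ((MvPolynomial.isHomogeneous_C_mul_X (b i) (0 : Fin 2)).sub
      (MvPolynomial.isHomogeneous_C_mul_X (a i) (1 : Fin 2))).pow (e i - 1)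
    simpa using this
  have h3 : wronskian P Q ≠ 0 := by
    rw [hk]
    refine smul_ne_zero k.ne_zero (Finset.prod_ne_zero_iff.2 fun i _ => pow_ne_zero _ fun h0 => ?_)
    apply hQ i
    have e1 := congrArg (MvPolynomial.eval ![1, 0]) h0
    have e2 := congrArg (MvPolynomial.eval ![0, 1]) h0
    simp at e1 e2
    exact ⟨e2, e1⟩
  have := h2.inj_right h1 h3
  omega

lemma no_root {P Q : MvPolynomial (Fin 2) F} (h : NoCommonRoot P Q) (s t : F) :
    ¬ ((dh s P).eval t = 0 ∧ (dh s Q).eval t = 0) := by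
  rintro ⟨h1, h2⟩
  rw [eval_dh] at h1 h2
  have := h _ h1 h2
  have e0 := congrFun this 0
  have e1 := congrFun this 1
  simp at e0 e1
  simp [e0] at e1

open Polynomial in
lemma good_dvd [CharZero F] {n : ℕ} (hn : 1 < n) {m : ℕ} {a b c d : Fin m → F}
    {e : Fin m → ℕ} (he : ∀ i, 2 ≤ e i) {P Q : MvPolynomial (Fin 2) F}
    (h : Good n m a b c d e P Q) (s : F) (i : Fin m) (hs : b i - s * a i ≠ 0) :
    (X - C (a i / (b i - s * a i))) ^ (e i) ∣ C (d i) * dh s P - C (c i) * dh s Q := by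
  obtain ⟨hP, hQ, hr, ⟨k, hk⟩, hv⟩ := h
  set l := b i - s * a i with hl
  set t := a i / l with ht
  have hlin : dh s (MvPolynomial.C (b i) * MvPolynomial.X 0 -
            MvPolynomial.C (a i) * MvPolynomial.X 1) = C l * (X - C t) := by
    have : C l * C t = C (a i) := by rw [← C_mul, ht, mul_div_cancel₀ _ hs]
    rw [mul_sub, this, hl]
    simp [dh]
    ring
  have hw : (X - C t) ^ (e i - 1) ∣ dh s P * derivative (dh s Q) - derivative (dh s P) * dh s Q := by
    have h1 : (X - C t) ^ (e i - 1) ∣ dh s (wronskian P Q) := by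
      rw [hk, map_smul, map_prod, smul_eq_C_mul]
      apply Dvd.dvd.mul_left
      refine dvd_trans ?_ (Finset.dvd_prod_of_mem _ (Finset.mem_univ i))
      rw [map_pow, hlin, mul_pow]
      exact dvd_mul_left _ _
    have h2 := (dvd_neg.2 h1)
    rw [← dh_wronskian s hP hQ] at h2
    have hu : IsUnit (n : Polynomial F) := by
      rw [← C_eq_natCast, isUnit_C]
      exact (Nat.cast_ne_zero.2 (by omega)).isUnit
    exact (hu.dvd_mul_left).1 h2
  have hpt : ![a i, b i] = ![l * t, l * (1 + s * t)] := by
    have : l * t = a i := mul_div_cancel₀ _ hs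
    rw [this, show l * (1 + s * t) = l + s * (l * t) by ring, this, hl]
    congr 2
    ring
  have hf : (C (d i) * dh s P - C (c i) * dh s Q).eval t = 0 := by
    have := hv i
    rw [hpt, eval_scale hP, eval_scale hQ] at this
    simp only [eval_sub, eval_mul, eval_C, eval_dh]
    apply mul_left_cancel₀ (pow_ne_zero n hs)
    linear_combination this
  obtain ⟨j, hj⟩ : ∃ j, e i = j + 1 := ⟨e i - 1, by have := he i; omega⟩
  rw [hj] at hw ⊢
  rw [Nat.add_sub_cancel] at hw
  by_cases hp0 : (dh s P).eval t = 0
  · have hq0 : (dh s Q).eval t ≠ 0 := fun h => no_root hr s t ⟨hp0, h⟩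
    apply local_dvd_s9 t _ _ hf hq0
    convert hw.mul_left (C (d i)) using 1
    simp only [derivative_sub, derivative_C_mul]
    ring
  · apply local_dvd_s9 t _ _ hf hp0
    convert hw.mul_left (C (c i)) using 1
    simp only [derivative_sub, derivative_C_mul]
    ring

open Polynomial in
lemma good_unique [IsAlgClosed F] [CharZero F] {n : ℕ} (hn : 1 < n) {m : ℕ} (hm : 3 ≤ m)
    {a b c d : Fin m → F} (hQ : ∀ i, ¬(a i = 0 ∧ b i = 0))
    (hQdist : ∀ i j, i ≠ j → a i * b j - a j * b i ≠ 0)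
    {e : Fin m → ℕ} (he : ∀ i, 2 ≤ e i) (hP : ∀ i, ¬(c i = 0 ∧ d i = 0))
    {P Q P' Q' : MvPolynomial (Fin 2) F}
    (h : Good n m a b c d e P Q) (h' : Good n m a b c d e P' Q') :
    ∃ k : Fˣ, P' = (k : F) • P ∧ Q' = (k : F) • Q := by
  classical
  obtain ⟨s, hs⟩ : ∃ s : F, ∀ i, b i - s * a i ≠ 0 := by
    obtain ⟨s, hs⟩ := Infinite.exists_notMem_finset (Finset.univ.image fun i => b i / a i)
    refine ⟨s, fun i h0 => ?_⟩
    by_cases ha : a i = 0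
    · rw [ha] at h0
      exact hQ i ⟨ha, by simpa using h0⟩
    · apply hs
      rw [Finset.mem_image]
      exact ⟨i, Finset.mem_univ _, by field_simp; linear_combination h0⟩
  have hinj : Function.Injective fun i => a i / (b i - s * a i) := by
    intro i j hij
    by_contra hne
    apply hQdist i j hne
    have := (div_eq_div_iff (hs i) (hs j)).1 hij
    linear_combination this
  have hdvd : ∀ i, (X - C (a i / (b i - s * a i))) ^ (e i) ∣
      dh s P * dh s Q' - dh s P' * dh s Q := by
    intro i
    have h1 := good_dvd hn he h s i (hs i)
    have h2 := good_dvd hn he h' s i (hs i)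
    by_cases hd : d i = 0
    · have hc : c i ≠ 0 := fun hc => hP i ⟨hc, hd⟩
      refine ((isUnit_C.2 hc.isUnit).dvd_mul_left).1 ?_
      convert dvd_sub (h1.mul_right (dh s P')) (h2.mul_right (dh s P)) using 1
      ring
    · refine ((isUnit_C.2 (IsUnit.mk0 _ hd)).dvd_mul_left).1 ?_
      convert dvd_sub (h1.mul_right (dh s Q')) (h2.mul_right (dh s Q)) using 1
      ring
  have hprod : ∏ i, (X - C (a i / (b i - s * a i))) ^ (e i) ∣
      dh s P * dh s Q' - dh s P' * dh s Q := by
    apply Fintype.prod_dvd_of_coprime _ hdvd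
    intro i j hij
    exact (pairwise_coprime_X_sub_C hinj hij).pow
  have hzero : dh s P * dh s Q' - dh s P' * dh s Q = 0 := by
    apply eq_zero_of_dvd_of_natDegree_lt hprod
    have d1 : (dh s P * dh s Q' - dh s P' * dh s Q).natDegree ≤ n + n :=
      (natDegree_sub_le_of_le
        (natDegree_mul_le_of_le (dh_natDegree s h.1) (dh_natDegree s h'.2.1))
        (natDegree_mul_le_of_le (dh_natDegree s h'.1) (dh_natDegree s h.2.1))).trans_eq (max_self _)
    have d2 : (∏ i, (X - C (a i / (b i - s * a i))) ^ (e i)).natDegree = ∑ i, e i := by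
      rw [natDegree_prod_of_monic _ _ fun i _ => (monic_X_sub_C _).pow _]
      simp [natDegree_pow]
    have d3 : ∑ i, e i = ∑ i, (e i - 1) + m := by
      have : ∑ i, e i = ∑ i, ((e i - 1) + 1) :=
        Finset.sum_congr rfl fun i _ => by have := he i; omega
      rw [this, Finset.sum_add_distrib]
      simp
    have d4 := sum_e hn hQ h
    omega
  obtain ⟨k, hk1, hk2⟩ := uni_unique _ _ _ _ (no_root h.2.2.1 s) (no_root h'.2.2.1 s)
    (sub_eq_zero.1 hzero)
  refine ⟨k, ?_, ?_⟩
  · apply sub_eq_zero.1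
    apply dh_inj s (n := n)
    · rw [MvPolynomial.smul_eq_C_mul]
      exact h'.1.sub (h.1.C_mul _)
    · rw [map_sub, map_smul, hk1, sub_self]
  · apply sub_eq_zero.1
    apply dh_inj s (n := n)
    · rw [MvPolynomial.smul_eq_C_mul]
      exact h'.2.1.sub (h.2.1.C_mul _)
    · rw [map_sub, map_smul, hk2, sub_self]

end CGR

open CGR

theorem finitely_many_maps_with_given_ramification_divisor_and_critical_values
    (L : Type*) [Field L] [IsAlgClosed L] [CharZero L]
    (n : ℕ) (hn : 1 < n) (m : ℕ) (hm : 3 ≤ m)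
    -- the distinct points `Qᵢ = [aᵢ : bᵢ]` of the divisor `D`
    (a b : Fin m → L) (hQ : ∀ i, ¬(a i = 0 ∧ b i = 0))
    (hQdist : ∀ i j, i ≠ j → a i * b j - a j * b i ≠ 0)
    -- the multiplicities `eᵢ − 1` of `D`, with `eᵢ ≥ 2`
    (e : Fin m → ℕ) (he : ∀ i, 2 ≤ e i)
    -- the target points `Pᵢ = [cᵢ : dᵢ]`
    (c d : Fin m → L) (hP : ∀ i, ¬(c i = 0 ∧ d i = 0)) :
    ∃ T : Set (MvPolynomial (Fin 2) L × MvPolynomial (Fin 2) L), T.Finite ∧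
      ∀ P Q : MvPolynomial (Fin 2) L,
        P.IsHomogeneous n → Q.IsHomogeneous n → NoCommonRoot P Q →
        -- the ramification divisor of `φ` equals `D`
        (∃ k : Lˣ, wronskian P Q =
          (k : L) • ∏ i, (MvPolynomial.C (b i) * MvPolynomial.X 0 -
            MvPolynomial.C (a i) * MvPolynomial.X 1) ^ (e i - 1)) →
        -- `φ(Qᵢ) = Pᵢ` for all `i`
        (∀ i, d i * MvPolynomial.eval ![a i, b i] P =
              c i * MvPolynomial.eval ![a i, b i] Q) →
        ∃ pq ∈ T, ∃ k : Lˣ, P = (k : L) • pq.1 ∧ Q = (k : L) • pq.2 := by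
  by_cases hex : ∃ P Q : MvPolynomial (Fin 2) L, Good n m a b c d e P Q
  · obtain ⟨P₀, Q₀, h₀⟩ := hex
    refine ⟨{(P₀, Q₀)}, Set.finite_singleton _, fun P Q h1 h2 h3 h4 h5 => ?_⟩
    exact ⟨(P₀, Q₀), rfl, good_unique hn hm hQ hQdist he hP h₀ ⟨h1, h2, h3, h4, h5⟩⟩
  · exact ⟨∅, Set.finite_empty, fun P Q h1 h2 h3 h4 h5 =>
      (hex ⟨P, Q, h1, h2, h3, h4, h5⟩).elim⟩

end
end

section
/- Let K be a number field and let φ: P¹_K → P¹_K be a morphism of degree m ≥ 2 that ramifies at exactly two points of P¹(K̄). Then there exist a field extension L of K of degree at most 2 and Möbius transformations σ, γ ∈ PGL₂(L) such that the composition σ ∘ φ ∘ γ is the map x ↦ a·x^m for some a ∈ L^×. -/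
/-!
Statement 12.  Let `K` be a number field and `φ : ℙ¹_K → ℙ¹_K` of degree `m ≥ 2`
ramifying at exactly two points of `ℙ¹(K̄)`.  Then there are a field extension
`L/K` of degree at most `2` and Möbius transformations `σ, γ` over `L` such that
`σ ∘ φ ∘ γ` is `x ↦ a·x^m` (in homogeneous coordinates `[x : y] ↦ [a·x^m : y^m]`).

`φ` is encoded by a pair of homogeneous binary forms of degree `m` over `K` with no
common projective zero; `L` is realized as an intermediate field of `K̄/K`; elements
of `PGL₂(L)` are induced by matrices in `GL₂(L)` and equality of morphisms is
equality of the form pairs up to the scalar `lam`.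
-/

noncomputable section

open Polynomial

namespace CGR

variable {F : Type*} [Field F]

/-- Substitution of a matrix in a binary form. -/
def matComp {R : Type*} [CommRing R] (M : Matrix (Fin 2) (Fin 2) R)
    (P : MvPolynomial (Fin 2) R) : MvPolynomial (Fin 2) R :=
  MvPolynomial.bind₁ (fun i => ∑ j, MvPolynomial.C (M i j) * MvPolynomial.X j) P

end CGR

open CGR

section Core

variable {F E : Type*} [Field F] [CharZero F] [Field E] [Algebra F E] [IsAlgClosed E]

/-- Order at zero: a pencil member vanishing at `0` bounds the degree of the Wronskian. -/
theorem core_order (r g W : F[X]) (k : F) (hr : r ≠ 0) (hr0 : r.coeff 0 = 0)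
    (hg : g.coeff 0 ≠ 0)
    (hW : derivative r * g - r * derivative g = C k * W) (hk : k ≠ 0)
    (hroot : ∀ t : E, t ≠ 0 → aeval t W ≠ 0) :
    ∃ (e : ℕ) (r1 : F[X]), r = X ^ (e + 1) * r1 ∧ W.natDegree ≤ e := by
  obtain ⟨r1, h1, h2⟩ := r.exists_eq_pow_rootMultiplicity_mul_and_not_dvd hr 0
  rw [C_0, sub_zero] at h1 h2
  have hr1 : r1.coeff 0 ≠ 0 := fun h => h2 (X_dvd_iff.2 h)
  obtain ⟨e, he⟩ : ∃ e, r.rootMultiplicity 0 = e + 1 := by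
    refine Nat.exists_eq_succ_of_ne_zero fun h => ?_
    rw [h, pow_zero, one_mul] at h1
    exact hr1 (h1 ▸ hr0)
  rw [he] at h1
  refine ⟨e, r1, h1, ?_⟩
  set W1 : F[X] := (C ((e : F) + 1) * r1 + X * derivative r1) * g - X * r1 * derivative g with hW1
  have key : C k * W = X ^ e * W1 := by
    rw [← hW, h1, hW1]
    simp only [derivative_mul, derivative_X_pow, Nat.cast_add, Nat.cast_one,
      Nat.add_sub_cancel]
    ring
  have hW10 : W1.coeff 0 ≠ 0 := by
    rw [hW1]
    simp only [coeff_sub, mul_coeff_zero, coeff_add, coeff_C_zero, coeff_X_zero]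
    have : (e : F) + 1 ≠ 0 := by exact_mod_cast Nat.succ_ne_zero e
    simp [this, hr1, hg]
  have hdeg : W1.degree = 0 := by
    by_contra hne
    obtain ⟨t, ht⟩ := IsAlgClosed.exists_aeval_eq_zero E W1 hne
    have ht0 : t ≠ 0 := by
      rintro rfl
      rw [← coeff_zero_eq_aeval_zero'] at ht
      exact hW10 ((map_eq_zero _).1 ht)
    have := congrArg (aeval t) key
    rw [map_mul, map_mul, ht, mul_zero, aeval_C] at this
    rcases mul_eq_zero.1 this with h | h
    · exact hk ((map_eq_zero _).1 h)
    · exact hroot t ht0 h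
  have h3 : (C k * W).natDegree = W.natDegree := natDegree_C_mul hk
  rw [← h3, key]
  refine natDegree_mul_le.trans ?_
  rw [natDegree_X_pow, natDegree_eq_zero_iff_degree_le_zero.2 hdeg.le]
  simp

/-- Degree at infinity. -/
theorem core_degree (s h W : F[X]) (k : F) (m : ℕ) (hm : 1 ≤ m) (hs : s ≠ 0)
    (hsd : s.natDegree < m) (hhd : h.natDegree ≤ m) (hh : h.coeff m ≠ 0)
    (hW : derivative s * h - s * derivative h = C k * W) :
    m + s.natDegree - 1 ≤ W.natDegree := by
  obtain ⟨n, rfl⟩ : ∃ n, m = n + 1 := ⟨m - 1, by omega⟩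
  set f := s.natDegree with hf
  have hsf : s.coeff f ≠ 0 := by
    rw [hf]; exact leadingCoeff_ne_zero.2 hs
  have e2 : (s * derivative h).coeff (f + n) = s.coeff f * (h.coeff (n + 1) * (n + 1)) := by
    rw [coeff_mul_add_eq_of_natDegree_le le_rfl
      ((natDegree_derivative_le h).trans (by omega)), coeff_derivative]
  have e1 : (derivative s * h).coeff (f + n) = f * s.coeff f * h.coeff (n + 1) := by
    rcases Nat.eq_zero_or_pos f with h0 | h0
    · have : s = C (s.coeff 0) := eq_C_of_natDegree_eq_zero (hf ▸ h0)
      rw [this, h0]; simp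
    · obtain ⟨f', hf'⟩ : ∃ f', f = f' + 1 := ⟨f - 1, by omega⟩
      rw [show f + n = f' + (n + 1) by omega, coeff_mul_add_eq_of_natDegree_le
        ((natDegree_derivative_le s).trans (by omega)) hhd, coeff_derivative, hf']
      push_cast; ring
  have hc : (C k * W).coeff (f + n) ≠ 0 := by
    rw [← hW, coeff_sub, e1, e2]
    have : (f : F) * s.coeff f * h.coeff (n + 1) - s.coeff f * (h.coeff (n + 1) * (n + 1))
      = ((f : F) - (n + 1)) * (s.coeff f * h.coeff (n + 1)) := by ring
    rw [this]
    refine mul_ne_zero ?_ (mul_ne_zero hsf hh)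
    rw [sub_ne_zero]
    exact_mod_cast hsd.ne
  rw [coeff_C_mul] at hc
  have := le_natDegree_of_ne_zero (right_ne_zero_of_mul hc)
  omega

theorem core (p q : F[X]) (m : ℕ) (hm : 1 ≤ m) (hp : p.natDegree ≤ m) (hq : q.natDegree ≤ m)
    (h0 : ¬ (p.coeff 0 = 0 ∧ q.coeff 0 = 0)) (hi : ¬ (p.coeff m = 0 ∧ q.coeff m = 0))
    (hroot : ∀ t : E, t ≠ 0 → aeval t (derivative p * q - p * derivative q) ≠ 0) :
    ∃ c : F, c ≠ 0 ∧ c = q.coeff 0 * p.coeff m - p.coeff 0 * q.coeff m ∧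
      C (q.coeff 0) * p - C (p.coeff 0) * q = C c * X ^ m ∧
      C (q.coeff m) * p - C (p.coeff m) * q = C (-c) := by
  set W := derivative p * q - p * derivative q with hWdef
  have hW0 : W ≠ 0 := fun h => hroot 1 one_ne_zero (by rw [h, map_zero])
  -- general fact
  have gen : ∀ a b : F, ¬ (a = 0 ∧ b = 0) → C b * p - C a * q ≠ 0 := by
    intro a b hab h
    have h1 : C b * W = derivative (C b * p - C a * q) * q - (C b * p - C a * q) * derivative q := by
      simp only [hWdef, derivative_sub, derivative_C_mul]; ring
    have h2 : C a * W = derivative (C b * p - C a * q) * p - (C b * p - C a * q) * derivative p := by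
      simp only [hWdef, derivative_sub, derivative_C_mul]; ring
    rw [h] at h1 h2
    simp [hW0] at h1 h2
    exact hab ⟨h2, h1⟩
  have gen1 : ∀ a b : F,
      derivative (C b * p - C a * q) * q - (C b * p - C a * q) * derivative q = C b * W := by
    intro a b
    simp only [hWdef, derivative_sub, derivative_C_mul]; ring
  have gen2 : ∀ a b : F,
      derivative (C b * p - C a * q) * p - (C b * p - C a * q) * derivative p = C a * W := by
    intro a b
    simp only [hWdef, derivative_sub, derivative_C_mul]; ring
  have gend : ∀ a b : F, (C b * p - C a * q).natDegree ≤ m := fun a b =>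
    (natDegree_sub_le _ _).trans (max_le ((natDegree_C_mul_le _ _).trans hp)
      ((natDegree_C_mul_le _ _).trans hq))
  set r := C (q.coeff 0) * p - C (p.coeff 0) * q with hr
  set s := C (q.coeff m) * p - C (p.coeff m) * q with hs
  have hrne : r ≠ 0 := gen _ _ h0
  have hsne : s ≠ 0 := gen _ _ hi
  have hr0 : r.coeff 0 = 0 := by simp [hr]; ring
  have hsm : s.coeff m = 0 := by rw [hs, coeff_sub, coeff_C_mul, coeff_C_mul]; ring
  have hsd : s.natDegree < m := by
    refine lt_of_le_of_ne (gend _ _) fun h => ?_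
    rw [← h] at hsm
    exact hsne (leadingCoeff_eq_zero.1 hsm)
  obtain ⟨e, r1, hre, hWe⟩ : ∃ (e : ℕ) (r1 : F[X]), r = X ^ (e + 1) * r1 ∧ W.natDegree ≤ e := by
    by_cases hq0 : q.coeff 0 = 0
    · have hp0 : p.coeff 0 ≠ 0 := fun h => h0 ⟨h, hq0⟩
      exact core_order (E := E) r p W (p.coeff 0) hrne hr0 hp0 (gen2 _ _) hp0 hroot
    · exact core_order (E := E) r q W (q.coeff 0) hrne hr0 hq0 (gen1 _ _) hq0 hroot
  have hWd : m + s.natDegree - 1 ≤ W.natDegree := by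
    by_cases hqm : q.coeff m = 0
    · have hpm : p.coeff m ≠ 0 := fun h => hi ⟨h, hqm⟩
      exact core_degree s p W (p.coeff m) m hm hsne hsd hp hpm (gen2 _ _)
    · exact core_degree s q W (q.coeff m) m hm hsne hsd hq hqm (gen1 _ _)
  have hr1 : r1 ≠ 0 := by rintro rfl; exact hrne (by rw [hre, mul_zero])
  have hrd : r.natDegree = r1.natDegree + (e + 1) := by
    rw [hre, mul_comm, natDegree_mul_X_pow]
    exact hr1
  have hrm : r.natDegree ≤ m := gend _ _
  have hem : e + 1 = m := by omega
  have hs0 : s.natDegree = 0 := by omega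
  have hr10 : r1.natDegree = 0 := by omega
  have hr1C := eq_C_of_natDegree_eq_zero hr10
  have hsC := eq_C_of_natDegree_eq_zero hs0
  have hrc : r.coeff m = r1.coeff 0 := by
    rw [hre, hem]
    have := coeff_X_pow_mul r1 m 0
    simpa using this
  have hrc2 : r.coeff m = q.coeff 0 * p.coeff m - p.coeff 0 * q.coeff m := by
    rw [hr, coeff_sub, coeff_C_mul, coeff_C_mul]
  refine ⟨r1.coeff 0, ?_, ?_, ?_, ?_⟩
  · intro h
    rw [h, C_0] at hr1C
    exact hr1 hr1C
  · rw [← hrc, hrc2]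
  · rw [hre, hem, mul_comm, ← hr1C]
  · rw [hsC]
    congr 1
    rw [← hrc, hrc2, hs, coeff_sub, coeff_C_mul, coeff_C_mul]; ring

end Core

section Mv

theorem hom_sum {R : Type*} [CommRing R] {P : MvPolynomial (Fin 2) R} {n : ℕ}
    (hP : P.IsHomogeneous n) {d : Fin 2 →₀ ℕ} (hd : d ∈ P.support) : d 0 + d 1 = n := by
  have := hP (MvPolynomial.mem_support_iff.1 hd)
  rw [Finsupp.weight_apply, Finsupp.sum_fintype _ _ (by simp)] at this
  simpa [Fin.sum_univ_two] using this

theorem aeval_smul_hom {R S : Type*} [CommRing R] [CommRing S] [Algebra R S]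
    {P : MvPolynomial (Fin 2) R} {n : ℕ}
    (hP : P.IsHomogeneous n) (c : S) (u : Fin 2 → S) :
    MvPolynomial.aeval (fun i => c * u i) P = c ^ n * MvPolynomial.aeval u P := by
  rw [MvPolynomial.aeval_def, MvPolynomial.aeval_def, MvPolynomial.eval₂_eq',
    MvPolynomial.eval₂_eq', Finset.mul_sum]
  refine Finset.sum_congr rfl fun d hd => ?_
  rw [Fin.prod_univ_two, Fin.prod_univ_two, ← hom_sum hP hd]
  ring

theorem euler_aeval {R S : Type*} [CommRing R] [CommRing S] [Algebra R S]
    {P : MvPolynomial (Fin 2) R} {n : ℕ}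
    (hP : P.IsHomogeneous n) (u : Fin 2 → S) :
    (n : S) * MvPolynomial.aeval u P = u 0 * MvPolynomial.aeval u (MvPolynomial.pderiv 0 P) +
      u 1 * MvPolynomial.aeval u (MvPolynomial.pderiv 1 P) := by
  have := congrArg (MvPolynomial.aeval u) hP.sum_X_mul_pderiv
  rw [Fin.sum_univ_two] at this
  simp only [map_add, map_mul, MvPolynomial.aeval_X, nsmul_eq_mul, map_natCast] at this
  exact this.symm

variable {F : Type*} [Field F]

/-- Restriction of a form to the affine line `t ↦ t v + w`. -/
def restr (v w : Fin 2 → F) (P : MvPolynomial (Fin 2) F) : F[X] :=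
  MvPolynomial.aeval (fun i => C (v i) * X + C (w i)) P

theorem aeval_restr {E : Type*} [Field E] [Algebra F E] (v w : Fin 2 → F)
    (P : MvPolynomial (Fin 2) F) (t : E) :
    aeval t (restr v w P) =
      MvPolynomial.aeval (fun i => algebraMap F E (v i) * t + algebraMap F E (w i)) P := by
  unfold restr
  induction P using MvPolynomial.induction_on with
  | C a => simp [← Polynomial.C_eq_algebraMap]
  | add p q hp hq => simp only [map_add, hp, hq]
  | mul_X p i hp =>
    simp only [map_mul, hp, map_add, MvPolynomial.aeval_X, aeval_X, aeval_C]

theorem derivative_restr (v w : Fin 2 → F) (P : MvPolynomial (Fin 2) F) :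
    derivative (restr v w P) = C (v 0) * restr v w (MvPolynomial.pderiv 0 P) +
      C (v 1) * restr v w (MvPolynomial.pderiv 1 P) := by
  unfold restr
  induction P using MvPolynomial.induction_on with
  | C a => simp [← Polynomial.C_eq_algebraMap]
  | add p q hp hq => simp only [map_add, hp, hq]; ring
  | mul_X p i hp =>
    simp only [map_mul, derivative_mul, hp, MvPolynomial.pderiv_mul, map_add,
      MvPolynomial.aeval_X, derivative_X, derivative_C]
    fin_cases i <;> simp [MvPolynomial.pderiv_X] <;> ring

theorem natDegree_line (v w : F) : (C v * X + C w).natDegree ≤ 1 := natDegree_linear_le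

theorem natDegree_restr (v w : Fin 2 → F) {P : MvPolynomial (Fin 2) F} {n : ℕ}
    (hP : P.IsHomogeneous n) : (restr v w P).natDegree ≤ n := by
  unfold restr
  rw [MvPolynomial.aeval_def, MvPolynomial.eval₂_eq']
  refine natDegree_sum_le_of_forall_le _ _ fun d hd => ?_
  rw [← Polynomial.C_eq_algebraMap, Fin.prod_univ_two, ← hom_sum hP hd]
  refine (natDegree_C_mul_le _ _).trans (natDegree_mul_le.trans (add_le_add ?_ ?_))
  · simpa using natDegree_pow_le_of_le (d 0) (natDegree_line (v 0) (w 0))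
  · simpa using natDegree_pow_le_of_le (d 1) (natDegree_line (v 1) (w 1))

theorem coeff_restr (v w : Fin 2 → F) {P : MvPolynomial (Fin 2) F} {n : ℕ}
    (hP : P.IsHomogeneous n) : (restr v w P).coeff n = MvPolynomial.eval v P := by
  unfold restr
  rw [MvPolynomial.aeval_def, MvPolynomial.eval₂_eq', MvPolynomial.eval_eq', finsetSum_coeff]
  refine Finset.sum_congr rfl fun d hd => ?_
  rw [← Polynomial.C_eq_algebraMap, Fin.prod_univ_two, Fin.prod_univ_two, ← hom_sum hP hd,
    coeff_C_mul]
  congr 1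
  rw [coeff_mul_add_eq_of_natDegree_le]
  · have h0 := coeff_pow_of_natDegree_le (m := d 0) (natDegree_line (v 0) (w 0))
    have h1 := coeff_pow_of_natDegree_le (m := d 1) (natDegree_line (v 1) (w 1))
    rw [mul_one] at h0 h1
    rw [h0, h1]
    simp [coeff_C]
  · simpa using natDegree_pow_le_of_le (d 0) (natDegree_line (v 0) (w 0))
  · simpa using natDegree_pow_le_of_le (d 1) (natDegree_line (v 1) (w 1))

theorem coeff_zero_restr (v w : Fin 2 → F) (P : MvPolynomial (Fin 2) F) :
    (restr v w P).coeff 0 = MvPolynomial.eval w P := by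
  have := aeval_restr (E := F) v w P 0
  rw [← coeff_zero_eq_aeval_zero'] at this
  rw [← MvPolynomial.coe_aeval_eq_eval, RingHom.coe_coe]
  simpa using this

theorem aeval_wronskian {E : Type*} [Field E] [Algebra F E] (v w : Fin 2 → F)
    {P Q : MvPolynomial (Fin 2) F} {n : ℕ} (hP : P.IsHomogeneous n) (hQ : Q.IsHomogeneous n)
    (t : E) :
    (n : E) * aeval t (derivative (restr v w P) * restr v w Q -
      restr v w P * derivative (restr v w Q)) =
    algebraMap F E (v 0 * w 1 - v 1 * w 0) *
      MvPolynomial.aeval (fun i => algebraMap F E (v i) * t + algebraMap F E (w i))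
        (CGR.wronskian P Q) := by
  rw [derivative_restr, derivative_restr]
  simp only [CGR.wronskian, map_sub, map_mul, map_add, aeval_restr, aeval_C]
  set u : Fin 2 → E := fun i => algebraMap F E (v i) * t + algebraMap F E (w i) with hu
  have h0 : u 0 = algebraMap F E (v 0) * t + algebraMap F E (w 0) := rfl
  have h1 : u 1 = algebraMap F E (v 1) * t + algebraMap F E (w 1) := rfl
  have e1 := euler_aeval hP u
  have e2 := euler_aeval hQ u
  rw [h0, h1] at e1 e2
  linear_combination (algebraMap F E (v 0) * MvPolynomial.aeval u (MvPolynomial.pderiv 0 P) +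
    algebraMap F E (v 1) * MvPolynomial.aeval u (MvPolynomial.pderiv 1 P)) * e2 -
    (algebraMap F E (v 0) * MvPolynomial.aeval u (MvPolynomial.pderiv 0 Q) +
    algebraMap F E (v 1) * MvPolynomial.aeval u (MvPolynomial.pderiv 1 Q)) * e1

theorem eval_matComp (M : Matrix (Fin 2) (Fin 2) F) (P : MvPolynomial (Fin 2) F)
    (u : Fin 2 → F) : MvPolynomial.eval u (matComp M P) =
      MvPolynomial.eval (fun i => M i 0 * u 0 + M i 1 * u 1) P := by
  unfold matComp
  rw [← MvPolynomial.coe_aeval_eq_eval, ← MvPolynomial.coe_aeval_eq_eval, RingHom.coe_coe,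
    RingHom.coe_coe, MvPolynomial.aeval_bind₁]
  simp [Fin.sum_univ_two, MvPolynomial.aeval_C]

theorem eval_matComp_restr (v w : Fin 2 → F) (P : MvPolynomial (Fin 2) F) {n : ℕ}
    (hP : P.IsHomogeneous n) (u : Fin 2 → F) (hu : u 1 ≠ 0) :
    MvPolynomial.eval u (matComp !![v 0, w 0; v 1, w 1] P) =
      u 1 ^ n * (restr v w P).eval (u 0 / u 1) := by
  have h := aeval_restr (E := F) v w P (u 0 / u 1)
  rw [coe_aeval_eq_eval] at h
  rw [eval_matComp, h, ← aeval_smul_hom hP, ← MvPolynomial.coe_aeval_eq_eval, RingHom.coe_coe]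
  congr 2
  funext i
  fin_cases i <;> simp <;> field_simp

theorem assembly {E : Type*} [Field E] [CharZero F] [Algebra F E] [IsAlgClosed E]
    (m : ℕ) (hm : 2 ≤ m) (P Q : MvPolynomial (Fin 2) F)
    (hP : P.IsHomogeneous m) (hQ : Q.IsHomogeneous m)
    (v w : Fin 2 → F) (hvw : v 0 * w 1 - v 1 * w 0 ≠ 0)
    (hncr : ∀ u : Fin 2 → F, MvPolynomial.eval u P = 0 → MvPolynomial.eval u Q = 0 → u = 0)
    (hW : ∀ u : Fin 2 → E, MvPolynomial.aeval u (CGR.wronskian P Q) = 0 → ∃ c : E,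
      (∀ i, u i = c * algebraMap F E (v i)) ∨ (∀ i, u i = c * algebraMap F E (w i))) :
    ∃ (σ γ : Matrix.GeneralLinearGroup (Fin 2) F) (a lam : Fˣ),
        MvPolynomial.C ((σ : Matrix (Fin 2) (Fin 2) F) 0 0) *
            matComp (γ : Matrix (Fin 2) (Fin 2) F) P +
          MvPolynomial.C ((σ : Matrix (Fin 2) (Fin 2) F) 0 1) *
            matComp (γ : Matrix (Fin 2) (Fin 2) F) Q =
          MvPolynomial.C (lam : F) * (MvPolynomial.C (a : F) * MvPolynomial.X 0 ^ m) ∧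
        MvPolynomial.C ((σ : Matrix (Fin 2) (Fin 2) F) 1 0) *
            matComp (γ : Matrix (Fin 2) (Fin 2) F) P +
          MvPolynomial.C ((σ : Matrix (Fin 2) (Fin 2) F) 1 1) *
            matComp (γ : Matrix (Fin 2) (Fin 2) F) Q =
          MvPolynomial.C (lam : F) * (MvPolynomial.X 1 ^ m : MvPolynomial (Fin 2) F) := by
  have hroot : ∀ t : E, t ≠ 0 → aeval t (derivative (restr v w P) * restr v w Q -
      restr v w P * derivative (restr v w Q)) ≠ 0 := by
    intro t ht h
    have hk := aeval_wronskian (E := E) v w hP hQ t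
    rw [h, mul_zero] at hk
    have hd : algebraMap F E (v 0 * w 1 - v 1 * w 0) ≠ 0 := (_root_.map_ne_zero _).2 hvw
    obtain ⟨c, hc | hc⟩ := hW _ ((mul_eq_zero.1 hk.symm).resolve_left hd)
    · have h0 := hc 0
      have h1 := hc 1
      apply hd
      simp only [map_sub, map_mul] at h0 h1 ⊢
      linear_combination algebraMap F E (v 0) * h1 - algebraMap F E (v 1) * h0
    · have h0 := hc 0
      have h1 := hc 1
      apply hd
      simp only [map_sub, map_mul] at h0 h1 ⊢
      apply mul_left_cancel₀ ht
      linear_combination algebraMap F E (w 1) * h0 - algebraMap F E (w 0) * h1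
  have hv : v ≠ 0 := by rintro rfl; simp at hvw
  have hw : w ≠ 0 := by rintro rfl; simp at hvw
  obtain ⟨c, hc, hc', hr, hs⟩ := core (E := E) (restr v w P) (restr v w Q) m (by omega)
    (natDegree_restr v w hP) (natDegree_restr v w hQ)
    (by rw [coeff_zero_restr, coeff_zero_restr]; exact fun h => hw (hncr _ h.1 h.2))
    (by rw [coeff_restr _ _ hP, coeff_restr _ _ hQ]; exact fun h => hv (hncr _ h.1 h.2))
    hroot
  set p := restr v w P with hp
  set q := restr v w Q with hq
  let γ : Matrix (Fin 2) (Fin 2) F := !![v 0, w 0; v 1, w 1]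
  let σ : Matrix (Fin 2) (Fin 2) F := !![q.coeff 0, -p.coeff 0; q.coeff m, -p.coeff m]
  have hγ : γ.det ≠ 0 := by
    rw [Matrix.det_fin_two_of]
    intro h; apply hvw; linear_combination h
  have hσ : σ.det ≠ 0 := by
    rw [Matrix.det_fin_two_of]
    intro h; apply hc; linear_combination hc' - h
  refine ⟨Matrix.GeneralLinearGroup.mkOfDetNeZero σ hσ,
    Matrix.GeneralLinearGroup.mkOfDetNeZero γ hγ, -1, Units.mk0 (-c) (neg_ne_zero.2 hc), ?_, ?_⟩
  · change MvPolynomial.C (q.coeff 0) * matComp γ P + MvPolynomial.C (-p.coeff 0) * matComp γ Q =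
      MvPolynomial.C (-c) * (MvPolynomial.C (((-1 : Fˣ)) : F) * MvPolynomial.X 0 ^ m)
    apply mul_left_cancel₀ (MvPolynomial.X_ne_zero (1 : Fin 2))
    apply MvPolynomial.funext
    intro u
    by_cases hu : u 1 = 0
    · simp [hu]
    have := congrArg (eval (u 0 / u 1)) hr
    simp only [eval_sub, eval_mul, eval_C, eval_pow, eval_X] at this
    simp only [map_mul, map_add, MvPolynomial.eval_X, MvPolynomial.eval_C, map_pow]
    rw [eval_matComp_restr v w P hP u hu, eval_matComp_restr v w Q hQ u hu]
    rw [← hp, ← hq]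
    have h2 : u 0 ^ m = u 1 ^ m * (u 0 / u 1) ^ m := by rw [← mul_pow, mul_div_cancel₀ _ hu]
    rw [h2]
    simp only [Units.val_neg, Units.val_one]
    linear_combination u 1 * u 1 ^ m * this
  · change MvPolynomial.C (q.coeff m) * matComp γ P + MvPolynomial.C (-p.coeff m) * matComp γ Q =
      MvPolynomial.C (-c) * MvPolynomial.X 1 ^ m
    apply mul_left_cancel₀ (MvPolynomial.X_ne_zero (1 : Fin 2))
    apply MvPolynomial.funext
    intro u
    by_cases hu : u 1 = 0
    · simp [hu]
    have := congrArg (eval (u 0 / u 1)) hs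
    simp only [eval_sub, eval_mul, eval_C] at this
    simp only [map_mul, map_add, MvPolynomial.eval_X, MvPolynomial.eval_C, map_pow]
    rw [eval_matComp_restr v w P hP u hu, eval_matComp_restr v w Q hQ u hu]
    rw [← hp, ← hq]
    linear_combination u 1 * u 1 ^ m * this

end Mv

section Fields

open MvPolynomial in
theorem minpoly_natDegree_le {F E : Type*} [Field F] [CharZero F] [Field E] [Algebra F E]
    [IsAlgClosed E] [Algebra.IsAlgebraic F E] (t : E) (T : Finset E)
    (h : ∀ t' : E, Polynomial.aeval t' (minpoly F t) = 0 → t' ∈ T) :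
    (minpoly F t).natDegree ≤ T.card := by
  classical
  have hint : IsIntegral F t := (Algebra.IsAlgebraic.isAlgebraic t).isIntegral
  have hsep : (minpoly F t).Separable := (minpoly.irreducible hint).separable
  rw [← card_rootSet_eq_natDegree (K := E) hsep (IsAlgClosed.splits _),
    ← Set.toFinset_card]
  refine Finset.card_le_card fun t' ht' => h t' ?_
  rw [Set.mem_toFinset, mem_rootSet] at ht'
  exact ht'.2

theorem mem_of_unique {F E : Type*} [Field F] [CharZero F] [Field E] [Algebra F E]
    [IsAlgClosed E] [Algebra.IsAlgebraic F E] (t : E)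
    (h : ∀ t' : E, aeval t' (minpoly F t) = 0 → t' = t) :
    ∃ a : F, algebraMap F E a = t := by
  have h1 := minpoly_natDegree_le (F := F) t {t} (fun t' ht' => by simpa using h t' ht')
  have hint : IsIntegral F t := (Algebra.IsAlgebraic.isAlgebraic t).isIntegral
  have h2 := minpoly.natDegree_pos hint
  rw [Finset.card_singleton] at h1
  have h3 : (minpoly F t).natDegree = 1 := by omega
  exact minpoly.natDegree_eq_one_iff.1 h3

variable {K E : Type*} [Field K] [CharZero K] [Field E] [Algebra K E]

theorem vec1_ne : (![1, 0] : Fin 2 → E) ≠ 0 := fun h => one_ne_zero (congrFun h 0)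
theorem vec2_ne (s : E) : (![s, 1] : Fin 2 → E) ≠ 0 := fun h => one_ne_zero (congrFun h 1)

theorem proj_normal (x : Projectivization E (Fin 2 → E)) :
    x = Projectivization.mk E ![1, 0] vec1_ne ∨
      ∃ s : E, x = Projectivization.mk E ![s, 1] (vec2_ne s) := by
  induction x using Projectivization.ind with
  | h u hu =>
    by_cases h : u 1 = 0
    · left
      rw [Projectivization.mk_eq_mk_iff']
      refine ⟨u 0, ?_⟩
      funext i
      fin_cases i <;> simp [h]
    · right
      refine ⟨u 0 / u 1, ?_⟩
      rw [Projectivization.mk_eq_mk_iff']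
      refine ⟨u 1, ?_⟩
      funext i
      fin_cases i
      · simp; field_simp
      · simp

theorem minpoly_root_of_root {F : Type*} [Field F] [Algebra F E] (f : F[X]) (t t' : E)
    (ht : aeval t f = 0) (h : aeval t' (minpoly F t) = 0) : aeval t' f = 0 := by
  obtain ⟨g, hg⟩ := minpoly.dvd F t ht
  rw [hg, map_mul, h, zero_mul]

theorem isRoot_of_aeval {F : Type*} [Field F] [Algebra F E] (f : F[X]) (a : F)
    (h : aeval (algebraMap F E a) f = 0) : IsRoot f a := by
  rw [aeval_algebraMap_apply, coe_aeval_eq_eval] at h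
  exact (map_eq_zero _).1 h

/-- Case of one point at infinity and one finite point. -/
theorem case_inf [IsAlgClosed E] [Algebra.IsAlgebraic K E] (f : K[X]) (t : E)
    (ht : ∀ t' : E, aeval t' f = 0 ↔ t' = t) : ∃ a : K, algebraMap K E a = t :=
  mem_of_unique t fun t' h => (ht t').1 (minpoly_root_of_root f t t' ((ht t).2 rfl) h)

open IntermediateField in
/-- Case of two finite points. -/
theorem case_fin [IsAlgClosed E] [Algebra.IsAlgebraic K E] (f : K[X]) (s t : E) (hst : s ≠ t)
    (ht : ∀ t' : E, aeval t' f = 0 ↔ t' = s ∨ t' = t) :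
    ∃ L : IntermediateField K E, 0 < Module.finrank K L ∧ Module.finrank K L ≤ 2 ∧
      ∃ a b : L, (a : E) = s ∧ (b : E) = t := by
  classical
  have hint : IsIntegral K s := (Algebra.IsAlgebraic.isAlgebraic s).isIntegral
  have hd : (minpoly K s).natDegree ≤ 2 :=
    (minpoly_natDegree_le (F := K) s {s, t} (fun t' h => by
      have := (ht t').1 (minpoly_root_of_root f s t' ((ht s).2 (Or.inl rfl)) h)
      simpa using this)).trans Finset.card_le_two
  refine ⟨K⟮s⟯, ?_, ?_, ⟨s, mem_adjoin_simple_self K s⟩, ?_⟩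
  · rw [adjoin.finrank hint]; exact minpoly.natDegree_pos hint
  · rw [adjoin.finrank hint]; exact hd
  have : Algebra.IsAlgebraic K⟮s⟯ E := Algebra.IsAlgebraic.tower_top (K := K) K⟮s⟯
  have hint' : IsIntegral K⟮s⟯ t := (Algebra.IsAlgebraic.isAlgebraic t).isIntegral
  obtain ⟨b, hb⟩ := mem_of_unique (F := K⟮s⟯) t (fun t' h => by
    have h1 : aeval t' (f.map (algebraMap K K⟮s⟯)) = 0 := by
      refine minpoly_root_of_root _ t t' ?_ h
      rw [aeval_map_algebraMap]
      exact (ht t).2 (Or.inr rfl)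
    rw [aeval_map_algebraMap] at h1
    rcases (ht t').1 h1 with rfl | h2
    · exfalso
      apply hst
      have h3 : IsRoot (minpoly K⟮t'⟯ t) (⟨t', mem_adjoin_simple_self K t'⟩ : K⟮t'⟯) := by
        exact isRoot_of_aeval (E := E) _ _ h
      exact minpoly.root hint' h3
    · exact h2)
  exact ⟨b, rfl, hb⟩

theorem field_part [IsAlgClosed E] [Algebra.IsAlgebraic K E] (W : MvPolynomial (Fin 2) K) (n : ℕ)
    (hWh : W.IsHomogeneous n) (x y : Projectivization E (Fin 2 → E)) (hxy : x ≠ y)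
    (hram : ∀ z : Projectivization E (Fin 2 → E),
      MvPolynomial.aeval z.rep W = 0 ↔ z = x ∨ z = y) :
    ∃ L : IntermediateField K E, 0 < Module.finrank K L ∧ Module.finrank K L ≤ 2 ∧
      ∃ v w : Fin 2 → L, v 0 * w 1 - v 1 * w 0 ≠ 0 ∧
        ∀ u : Fin 2 → E, MvPolynomial.aeval u W = 0 → ∃ c : E,
          (∀ i, u i = c * algebraMap L E (v i)) ∨ (∀ i, u i = c * algebraMap L E (w i)) := by
  have hz : ∀ (u : Fin 2 → E) (hu : u ≠ 0), MvPolynomial.aeval u W = 0 ↔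
      Projectivization.mk E u hu = x ∨ Projectivization.mk E u hu = y := by
    intro u hu
    rw [← hram]
    obtain ⟨a, ha⟩ := Projectivization.exists_smul_eq_mk_rep E u hu
    have h1 : (Projectivization.mk E u hu).rep = fun i => (a : E) * u i := by
      rw [← ha]; rfl
    rw [h1, aeval_smul_hom hWh]
    simp
  -- the univariate polynomial
  set f : K[X] := restr ![1, 0] ![0, 1] W with hf
  have hfz : ∀ t : E, aeval t f = 0 ↔ MvPolynomial.aeval ![t, 1] W = 0 := by
    intro t
    rw [hf, aeval_restr]
    have : (fun i => algebraMap K E ((![1, 0] : Fin 2 → K) i) * t +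
        algebraMap K E ((![0, 1] : Fin 2 → K) i)) = ![t, 1] := by
      funext i; fin_cases i <;> simp
    rw [this]
  have mk1 : ∀ s t : E, Projectivization.mk E ![s, 1] (vec2_ne s) =
      Projectivization.mk E ![t, 1] (vec2_ne t) ↔ s = t := by
    intro s t
    constructor
    · intro h
      obtain ⟨a, ha⟩ := (Projectivization.mk_eq_mk_iff' E _ _ _ _).1 h
      have h0 := congrFun ha 0
      have h1 := congrFun ha 1
      simp at h0 h1
      rw [← h0, h1, one_mul]
    · rintro rfl; rfl
  have mk2 : ∀ s : E, Projectivization.mk E ![s, 1] (vec2_ne s) ≠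
      Projectivization.mk E ![1, 0] vec1_ne := by
    intro s h
    obtain ⟨a, ha⟩ := (Projectivization.mk_eq_mk_iff' E _ _ _ _).1 h
    have h1 := congrFun ha 1
    simp at h1
  -- final packaging
  have pack : ∀ (L : IntermediateField K E) (v w : Fin 2 → L)
      (hv : (fun i => algebraMap L E (v i)) ≠ 0) (hw : (fun i => algebraMap L E (w i)) ≠ 0),
      (∀ (u : Fin 2 → E) (hu : u ≠ 0), MvPolynomial.aeval u W = 0 ↔
        Projectivization.mk E u hu = Projectivization.mk E _ hv ∨
        Projectivization.mk E u hu = Projectivization.mk E _ hw) →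
      ∀ u : Fin 2 → E, MvPolynomial.aeval u W = 0 → ∃ c : E,
          (∀ i, u i = c * algebraMap L E (v i)) ∨ (∀ i, u i = c * algebraMap L E (w i)) := by
    intro L v w hv hw h u hu
    by_cases hu0 : u = 0
    · exact ⟨0, Or.inl fun i => by simp [hu0]⟩
    rcases (h u hu0).1 hu with h1 | h1
    · obtain ⟨a, ha⟩ := (Projectivization.mk_eq_mk_iff' E _ _ _ _).1 h1
      exact ⟨a, Or.inl fun i => by rw [← ha]; rfl⟩
    · obtain ⟨a, ha⟩ := (Projectivization.mk_eq_mk_iff' E _ _ _ _).1 h1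
      exact ⟨a, Or.inr fun i => by rw [← ha]; rfl⟩
  have inf : ∀ t : E, (∀ (u : Fin 2 → E) (hu : u ≠ 0), MvPolynomial.aeval u W = 0 ↔
        Projectivization.mk E u hu = Projectivization.mk E ![1, 0] vec1_ne ∨
        Projectivization.mk E u hu = Projectivization.mk E ![t, 1] (vec2_ne t)) →
      ∃ L : IntermediateField K E, 0 < Module.finrank K L ∧ Module.finrank K L ≤ 2 ∧
      ∃ v w : Fin 2 → L, v 0 * w 1 - v 1 * w 0 ≠ 0 ∧
        ∀ u : Fin 2 → E, MvPolynomial.aeval u W = 0 → ∃ c : E,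
          (∀ i, u i = c * algebraMap L E (v i)) ∨ (∀ i, u i = c * algebraMap L E (w i)) := by
    intro t h
    obtain ⟨a, ha⟩ := case_inf f t (fun t' => by
      rw [hfz, h _ (vec2_ne t'), mk1]
      simp [mk2])
    have e1 : (fun i => algebraMap (⊥ : IntermediateField K E) E
        ((![1, 0] : Fin 2 → (⊥ : IntermediateField K E)) i)) = ![1, 0] := by
      funext i; fin_cases i <;> simp
    have e2 : (fun i => algebraMap (⊥ : IntermediateField K E) E
        ((![algebraMap K _ a, 1] : Fin 2 → (⊥ : IntermediateField K E)) i)) = ![t, 1] := by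
      funext i
      fin_cases i
      · exact ha
      · simp
    refine ⟨⊥, by simp, by simp, ![1, 0], ![algebraMap K _ a, 1], by simp, ?_⟩
    refine pack _ _ _ (by rw [e1]; exact vec1_ne) (by rw [e2]; exact vec2_ne t) ?_
    simpa only [e1, e2] using h
  rcases proj_normal x with hx | ⟨s, hx⟩ <;> rcases proj_normal y with hy | ⟨t, hy⟩
  · exact absurd (hx.trans hy.symm) hxy
  · subst hx hy
    exact inf t hz
  · subst hx hy
    exact inf s fun u hu => (hz u hu).trans or_comm
  · subst hx hy
    have hst : s ≠ t := fun h => hxy ((mk1 s t).2 h)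
    obtain ⟨L, h1, h2, a, b, ha, hb⟩ := case_fin f s t hst (fun t' => by
      rw [hfz, hz _ (vec2_ne t'), mk1, mk1])
    have e1 : (fun i => algebraMap L E ((![a, 1] : Fin 2 → L) i)) = ![s, 1] := by
      funext i
      fin_cases i
      · exact ha
      · simp
    have e2 : (fun i => algebraMap L E ((![b, 1] : Fin 2 → L) i)) = ![t, 1] := by
      funext i
      fin_cases i
      · exact hb
      · simp
    refine ⟨L, h1, h2, ![a, 1], ![b, 1], ?_, ?_⟩
    · intro h
      apply hst
      rw [← ha, ← hb]
      simp at h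
      rw [sub_eq_zero.1 h]
    · refine pack _ _ _ (by rw [e1]; exact vec2_ne s) (by rw [e2]; exact vec2_ne t) ?_
      simpa only [e1, e2] using hz

theorem wronskian_map {F G : Type*} [Field F] [Field G] (φ : F →+* G)
    (P Q : MvPolynomial (Fin 2) F) :
    CGR.wronskian (MvPolynomial.map φ P) (MvPolynomial.map φ Q) =
      MvPolynomial.map φ (CGR.wronskian P Q) := by
  simp only [CGR.wronskian, MvPolynomial.pderiv_map, map_sub, map_mul]

theorem wronskian_hom {F : Type*} [Field F]
    {P Q : MvPolynomial (Fin 2) F} {m : ℕ} (hP : P.IsHomogeneous m) (hQ : Q.IsHomogeneous m) :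
    (CGR.wronskian P Q).IsHomogeneous ((m - 1) + (m - 1)) :=
  (hP.pderiv.mul hQ.pderiv).sub (hP.pderiv.mul hQ.pderiv)

end Fields

theorem two_ramification_points_implies_conjugate_to_power_map
    (K : Type*) [Field K] [NumberField K]
    (m : ℕ) (hm : 2 ≤ m)
    (P Q : MvPolynomial (Fin 2) K)
    (hP : P.IsHomogeneous m) (hQ : Q.IsHomogeneous m)
    (hncr : NoCommonRoot (MvPolynomial.map (algebraMap K (AlgebraicClosure K)) P)
      (MvPolynomial.map (algebraMap K (AlgebraicClosure K)) Q))
    -- `φ` ramifies at exactly two points of `ℙ¹(K̄)`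
    (hram : ∃ x y, x ≠ y ∧
      ramPoints (MvPolynomial.map (algebraMap K (AlgebraicClosure K)) P)
        (MvPolynomial.map (algebraMap K (AlgebraicClosure K)) Q) = {x, y}) :
    -- there are a quadratic (or trivial) extension `L/K` and `σ, γ ∈ PGL₂(L)`
    -- with `σ ∘ φ ∘ γ : x ↦ a·x^m`
    ∃ L : IntermediateField K (AlgebraicClosure K),
      0 < Module.finrank K ↥L ∧ Module.finrank K ↥L ≤ 2 ∧
      ∃ (σ γ : Matrix.GeneralLinearGroup (Fin 2) ↥L) (a lam : (↥L)ˣ),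
        MvPolynomial.C ((σ : Matrix (Fin 2) (Fin 2) ↥L) 0 0) *
            matComp (γ : Matrix (Fin 2) (Fin 2) ↥L)
              (MvPolynomial.map (algebraMap K ↥L) P) +
          MvPolynomial.C ((σ : Matrix (Fin 2) (Fin 2) ↥L) 0 1) *
            matComp (γ : Matrix (Fin 2) (Fin 2) ↥L)
              (MvPolynomial.map (algebraMap K ↥L) Q) =
          MvPolynomial.C (lam : ↥L) * (MvPolynomial.C (a : ↥L) * MvPolynomial.X 0 ^ m) ∧
        MvPolynomial.C ((σ : Matrix (Fin 2) (Fin 2) ↥L) 1 0) *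
            matComp (γ : Matrix (Fin 2) (Fin 2) ↥L)
              (MvPolynomial.map (algebraMap K ↥L) P) +
          MvPolynomial.C ((σ : Matrix (Fin 2) (Fin 2) ↥L) 1 1) *
            matComp (γ : Matrix (Fin 2) (Fin 2) ↥L)
              (MvPolynomial.map (algebraMap K ↥L) Q) =
          MvPolynomial.C (lam : ↥L) * (MvPolynomial.X 1 ^ m : MvPolynomial (Fin 2) ↥L) := by
  obtain ⟨x, y, hxy, hset⟩ := hram
  have hram' : ∀ z : Projectivization (AlgebraicClosure K) (Fin 2 → AlgebraicClosure K),
      MvPolynomial.aeval z.rep (CGR.wronskian P Q) = 0 ↔ z = x ∨ z = y := by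
    intro z
    have h := Set.ext_iff.1 hset z
    rw [ramPoints, Set.mem_ofPred_eq, wronskian_map, MvPolynomial.eval_map] at h
    exact h
  obtain ⟨L, h1, h2, v, w, hvw, hW⟩ := field_part (CGR.wronskian P Q) _ (wronskian_hom hP hQ)
    x y hxy hram'
  refine ⟨L, h1, h2, ?_⟩
  refine assembly (E := AlgebraicClosure K) m hm _ _ (hP.map _) (hQ.map _) v w hvw ?_ ?_
  · intro u hu1 hu2
    have tr : ∀ R : MvPolynomial (Fin 2) K,
        MvPolynomial.eval u (MvPolynomial.map (algebraMap K L) R) = 0 →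
        MvPolynomial.eval (fun i => algebraMap L (AlgebraicClosure K) (u i))
          (MvPolynomial.map (algebraMap K (AlgebraicClosure K)) R) = 0 := by
      intro R hR
      have h3 := congrArg (algebraMap L (AlgebraicClosure K)) hR
      rw [map_zero, MvPolynomial.eval_map, MvPolynomial.hom_eval₂] at h3
      rw [MvPolynomial.eval_map]
      exact h3
    have h4 := hncr _ (tr P hu1) (tr Q hu2)
    funext i
    exact (map_eq_zero _).1 (congrFun h4 i)
  · intro u hu
    rw [wronskian_map, MvPolynomial.aeval_map_algebraMap] at hu
    exact hW u hu

end
end
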